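/- arXiv:1003.0460 — 10 statements merged into one kernel-verified Lean document; each statement's English description precedes it below -/
import Mathlib

section
/- Let P be a polygonal curve in ℝ^d, let μ ≥ 0, and let P' be a μ-simplification of P. Then for every point q ∈ ℝ^d and every R > 0, the length of P inside the closed ball B(q, R + μ) is at least the length of P' inside the closed ball B(q, R). -/
/-!
Consider an edge `[u, v]` of the simplification and the part of `p` that it replaces, and let `π`
be the orthogonal projection onto the line through `u` and `v`. Every vertex of that part is within
`μ` of `u` or equals `v`, so by convexity `π` moves each of its points by at most `μ`. By the
intermediate value property, the images under `π` of its edges cover `[u, v]`. Hence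
`[u, v] ∩ B(q, R)` is covered by the images of the sets `e ∩ B(q, R + μ)`, where `e` runs over the
replaced edges (`segment_inter_subset`). As `π` is 1-Lipschitz, it does not increase `μH[1]`, which
gives the inequality for one edge (`edge_le`). Different edges of the simplification replace
disjoint blocks of edges of `p`, so summing over them concludes.
-/

open MeasureTheory Metric Set
open scoped ENNReal NNReal

noncomputable section

abbrev Pt (d : ℕ) := EuclideanSpace ℝ (Fin d)

/-- The length of the polygonal curve with vertices `p` inside the set `A`:
the sum over its edges `e` of the one-dimensional Hausdorff measure of `e ∩ A`. -/
def polyLengthIn {d k : ℕ} (p : Fin (k + 1) → Pt d) (A : Set (Pt d)) : ℝ≥0∞ :=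
  ∑ i : Fin k, μH[1] (segment ℝ (p i.castSucc) (p i.succ) ∩ A)

/-- A polygonal curve is `c`-packed if its length inside any closed ball of
radius `r > 0` is at most `c * r`. -/
def IsCPacked {d k : ℕ} (c : ℝ) (p : Fin (k + 1) → Pt d) : Prop :=
  ∀ (q : Pt d) (r : ℝ), 0 < r →
    polyLengthIn p (closedBall q r) ≤ ENNReal.ofReal (c * r)

/-- `p'` is a `μ`-simplification of `p`. -/
def IsSimplification {d k m : ℕ} (μ : ℝ) (p : Fin (k + 1) → Pt d)
    (p' : Fin (m + 1) → Pt d) : Prop :=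
  ∃ idx : Fin (m + 1) → Fin (k + 1),
    StrictMono idx ∧ idx 0 = 0 ∧ idx (Fin.last m) = Fin.last k ∧
    (∀ j, p' j = p (idx j)) ∧
    (∀ j : Fin m, μ ≤ dist (p (idx j.castSucc)) (p (idx j.succ))) ∧
    (∀ j : Fin m, ∀ l : Fin (k + 1), idx j.castSucc < l → l < idx j.succ →
      dist (p l) (p (idx j.castSucc)) ≤ μ)

/-- `φ` traverses the polygonal curve with vertices `p`. -/
def Traverses {d m : ℕ} (φ : ℝ → Pt d) (p : Fin (m + 1) → Pt d) : Prop :=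
  ∃ t : Fin (m + 1) → ℝ, Monotone t ∧ t 0 = 0 ∧ t (Fin.last m) = 1 ∧
    ∀ j : Fin m,
      (t j.castSucc = t j.succ → p j.castSucc = p j.succ) ∧
      ∀ s ∈ Icc (t j.castSucc) (t j.succ),
        φ s = AffineMap.lineMap (p j.castSucc) (p j.succ)
          ((s - t j.castSucc) / (t j.succ - t j.castSucc))

/-- A polygonal curve is `φ`-low-density if for every `q` and `r > 0` at most `φ`
of its edges of length at least `r` intersect the closed ball `B(q, r)`. -/
def IsLowDensity {d k : ℕ} (φ : ℝ) (p : Fin (k + 1) → Pt d) : Prop :=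
  ∀ (q : Pt d) (r : ℝ), 0 < r →
    ({i : Fin k | r ≤ dist (p i.castSucc) (p i.succ) ∧
        (segment ℝ (p i.castSucc) (p i.succ) ∩ closedBall q r).Nonempty}.ncard : ℝ) ≤ φ

/-- The axis-parallel cube `x + [0, s]^d`. -/
def cube {d : ℕ} (x : Pt d) (s : ℝ) : Set (Pt d) :=
  {y : Pt d | ∀ i, y i ∈ Icc (x i) (x i + s)}

/-- The infimum distance between two sets. -/
def segSetDist {d : ℕ} (e f : Set (Pt d)) : ℝ := sInf (Set.image2 dist e f)

/-- A curve is `κ`-bounded. -/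
def IsKBounded {d : ℕ} (κ : ℝ) (γ : ℝ → Pt d) : Prop :=
  ∀ s t : ℝ, 0 ≤ s → s ≤ t → t ≤ 1 → ∀ u, s ≤ u → u ≤ t →
    γ u ∈ closedBall (γ s) ((κ / 2) * dist (γ s) (γ t)) ∪
          closedBall (γ t) ((κ / 2) * dist (γ s) (γ t))

/-- Discrete intermediate value property: the intervals between consecutive values of `g` from
`a` to `b` cover the interval between `g a` and `g b`. -/
lemma exists_mem_uIcc_step {k : ℕ} (g : Fin (k + 1) → ℝ) (t : ℝ) (a b : Fin (k + 1))
    (hab : a < b) (ht : t ∈ uIcc (g a) (g b)) :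
    ∃ i : Fin k, a ≤ i.castSucc ∧ i.castSucc < b ∧ t ∈ uIcc (g i.castSucc) (g i.succ) := by
  induction b using Fin.induction with
  | zero => exact absurd hab (Fin.not_lt_zero a)
  | succ i ih =>
    have hai : a ≤ i.castSucc := Fin.le_castSucc_iff.2 hab
    rcases uIcc_subset_uIcc_union_uIcc (b := g i.castSucc) ht with h | h
    · rcases hai.eq_or_lt with rfl | hlt
      · refine ⟨i, le_rfl, hab, ?_⟩
        rw [uIcc_self, mem_singleton_iff] at h
        exact h ▸ left_mem_uIcc
      · obtain ⟨l, h1, h2, h3⟩ := ih hlt h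
        exact ⟨l, h1, h2.trans (Fin.castSucc_lt_succ), h3⟩
    · exact ⟨i, hai, Fin.castSucc_lt_succ, h⟩

/-- The orthogonal projection onto the line through `u` and `v`; the constant map `u` when
`u = v`. -/
def lineProj {d : ℕ} (u v x : Pt d) : Pt d :=
  u + (Submodule.span ℝ {v - u}).starProjection (x - u)

lemma lineProj_lipschitz {d : ℕ} (u v : Pt d) : LipschitzWith 1 (lineProj u v) := by
  refine LipschitzWith.of_dist_le_mul fun x y => ?_
  rw [lineProj, lineProj, dist_add_left, dist_eq_norm, ← map_sub, sub_sub_sub_cancel_right,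
    dist_eq_norm, NNReal.coe_one, one_mul]
  exact Submodule.norm_starProjection_apply_le _ _

lemma dist_lineProj {d : ℕ} (u v x : Pt d) :
    dist x (lineProj u v x) = ‖(Submodule.span ℝ {v - u})ᗮ.starProjection (x - u)‖ := by
  rw [Submodule.starProjection_orthogonal_val, lineProj, dist_eq_norm, sub_add_eq_sub_sub]

lemma dist_lineProj_le {d : ℕ} (u v x : Pt d) : dist x (lineProj u v x) ≤ dist x u := by
  rw [dist_lineProj, dist_eq_norm]
  exact Submodule.norm_starProjection_apply_le _ _

/-- Points within `μ` of the line form a convex set. -/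
lemma convex_dist_lineProj_le {d : ℕ} (u v : Pt d) (μ : ℝ) :
    Convex ℝ {x : Pt d | dist x (lineProj u v x) ≤ μ} := by
  have h : {x : Pt d | dist x (lineProj u v x) ≤ μ} =
      (Submodule.span ℝ {v - u})ᗮ.starProjection.toLinearMap ⁻¹'
        closedBall ((Submodule.span ℝ {v - u})ᗮ.starProjection u) μ := by
    ext x
    rw [mem_ofPred_eq, dist_lineProj, map_sub, ← dist_eq_norm]
    rfl
  rw [h]
  exact (convex_closedBall _ _).linear_preimage _

/-- A point `y` of the segment is the projection of any `x` at the same height in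
direction `v - u`. -/
lemma lineProj_eq {d : ℕ} {u v x y : Pt d} (hy : y ∈ segment ℝ u v)
    (h : inner ℝ (v - u) x = inner ℝ (v - u) y) : lineProj u v x = y := by
  have hy' : y - u ∈ Submodule.span ℝ {v - u} := by
    rw [segment_eq_image'] at hy
    obtain ⟨t, -, rfl⟩ := hy
    rw [add_sub_cancel_left]
    exact Submodule.smul_mem _ _ (Submodule.mem_span_singleton_self _)
  have hxy : x - y ∈ (Submodule.span ℝ {v - u})ᗮ := by
    rw [Submodule.mem_orthogonal_singleton_iff_inner_right, inner_sub_right, h, sub_self]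
  rw [lineProj, ← sub_add_sub_cancel x y u, map_add,
    Submodule.starProjection_eq_self_iff.2 hy',
    (Submodule.starProjection_apply_eq_zero_iff _).2 hxy]
  abel

/-- The edges of the part of `p` from `a` to `b`, cut off by the larger ball, project onto a set
containing the part of `[p a, p b]` in the smaller ball. -/
lemma segment_inter_subset {d k : ℕ} {μ : ℝ} (hμ : 0 ≤ μ) (p : Fin (k + 1) → Pt d)
    (a b : Fin (k + 1)) (hab : a < b)
    (hd : ∀ l, a < l → l < b → dist (p l) (p a) ≤ μ) (q : Pt d) (R : ℝ) :
    segment ℝ (p a) (p b) ∩ closedBall q R ⊆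
      ⋃ i ∈ Finset.univ.filter (fun i : Fin k => a ≤ i.castSucc ∧ i.castSucc < b),
        lineProj (p a) (p b) ''
          (segment ℝ (p i.castSucc) (p i.succ) ∩ closedBall q (R + μ)) := by
  rintro y ⟨hy, hyq⟩
  set g : Pt d →ₗ[ℝ] ℝ := (innerSL ℝ (p b - p a)).toLinearMap with hg
  -- `g` maps a segment onto the interval between the images of its endpoints
  have himg : ∀ x z : Pt d, g '' segment ℝ x z = uIcc (g x) (g z) := fun x z => by
    rw [← segment_eq_uIcc]
    exact image_segment ℝ g.toAffineMap x z
  have hgy : g y ∈ uIcc (g (p a)) (g (p b)) := himg _ _ ▸ mem_image_of_mem _ hy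
  obtain ⟨i, h1, h2, h3⟩ := exists_mem_uIcc_step (fun l => g (p l)) _ a b hab hgy
  rw [← himg] at h3
  obtain ⟨x, hx, hxy⟩ := h3
  have hπ : lineProj (p a) (p b) x = y := lineProj_eq hy hxy
  have hvert : ∀ l, a ≤ l → l ≤ b →
      p l ∈ {x : Pt d | dist x (lineProj (p a) (p b) x) ≤ μ} := by
    intro l hal hlb
    rcases hlb.eq_or_lt with rfl | hlb
    · rw [mem_ofPred_eq, lineProj_eq (right_mem_segment ℝ _ _) rfl, dist_self]
      exact hμ
    · refine (dist_lineProj_le _ _ _).trans ?_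
      rcases hal.eq_or_lt with rfl | hal
      · rwa [dist_self]
      · exact hd l hal hlb
  have hxμ : dist x y ≤ μ := by
    have := (convex_dist_lineProj_le (p a) (p b) μ).segment_subset
      (hvert i.castSucc h1 h2.le)
      (hvert i.succ (h1.trans Fin.castSucc_lt_succ.le) (Fin.castSucc_lt_iff_succ_le.1 h2)) hx
    rwa [mem_ofPred_eq, hπ] at this
  simp only [mem_iUnion, Finset.mem_filter, Finset.mem_univ, true_and]
  refine ⟨i, ⟨h1, h2⟩, x, ⟨hx, ?_⟩, hπ⟩
  rw [mem_closedBall] at hyq ⊢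
  linarith [dist_triangle x y q]

lemma edge_le {d k : ℕ} {μ : ℝ} (hμ : 0 ≤ μ) (p : Fin (k + 1) → Pt d)
    (a b : Fin (k + 1)) (hab : a < b)
    (hd : ∀ l, a < l → l < b → dist (p l) (p a) ≤ μ) (q : Pt d) (R : ℝ) :
    μH[1] (segment ℝ (p a) (p b) ∩ closedBall q R) ≤
      ∑ i ∈ Finset.univ.filter (fun i : Fin k => a ≤ i.castSucc ∧ i.castSucc < b),
        μH[1] (segment ℝ (p i.castSucc) (p i.succ) ∩ closedBall q (R + μ)) := by
  refine (measure_mono (segment_inter_subset hμ p a b hab hd q R)).trans ?_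
  refine (measure_biUnion_finset_le _ _).trans (Finset.sum_le_sum fun i _ => ?_)
  simpa using (lineProj_lipschitz (p a) (p b)).hausdorffMeasure_image_le zero_le_one
    (segment ℝ (p i.castSucc) (p i.succ) ∩ closedBall q (R + μ))

/-- The length of `p` inside `B(q, R + μ)` is at least the length of its
`μ`-simplification `p'` inside `B(q, R)`. -/
theorem length_simplification_le {d k m : ℕ} (μ : ℝ) (hμ : 0 ≤ μ)
    (p : Fin (k + 1) → Pt d) (p' : Fin (m + 1) → Pt d)
    (h : IsSimplification μ p p') (q : Pt d) (R : ℝ) (hR : 0 < R) :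
    polyLengthIn p' (closedBall q R) ≤ polyLengthIn p (closedBall q (R + μ)) := by
  obtain ⟨idx, hmono, -, -, hp, -, hd⟩ := h
  simp only [polyLengthIn, hp]
  refine (Finset.sum_le_sum fun j _ => edge_le hμ p (idx j.castSucc) (idx j.succ)
    (hmono Fin.castSucc_lt_succ) (hd j) q R).trans ?_
  rw [← Finset.sum_biUnion]
  · exact Finset.sum_le_sum_of_subset (Finset.subset_univ _)
  · -- an edge of `p` lying in the blocks of both `j` and `j'` would lie before and after the
    -- vertex where the earlier block ends
    have key : ∀ j j' : Fin m, j < j' → ∀ i : Fin k, i.castSucc < idx j.succ →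
        ¬ idx j'.castSucc ≤ i.castSucc := fun j j' hjj i h1 h2 =>
      absurd (h1.trans_le ((hmono.monotone (Fin.le_castSucc_iff.2
        (Fin.succ_lt_succ_iff.2 hjj))).trans h2)) (lt_irrefl _)
    intro j _ j' _ hne
    refine Finset.disjoint_left.2 fun i hi hi' => ?_
    simp only [Finset.mem_filter, Finset.mem_univ, true_and] at hi hi'
    rcases lt_or_gt_of_ne hne with hlt | hlt
    · exact key j j' hlt i hi.2 hi'.1
    · exact key j' j hlt i hi'.2 hi.1
end
end

section
/- Let P be a c-packed polygonal curve in ℝ^d, let μ > 0, and let P' be a μ-simplification of P. Then P' is a 6c-packed curve. -/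
/-!
Let `u_j` be the edges of the simplification and `w_j` the subcurve of `p` that `u_j` replaces.
All vertices of `w_j` lie within `μ` of `u_j`, hence so does all of `w_j`, since the
`μ`-neighbourhood of a segment is convex. The nearest-point projection `π` onto `u_j` is
`1`-Lipschitz, moves points of `w_j` by at most `μ`, and by connectedness maps `w_j` onto `u_j`.
Hence the length of `u_j` in `B(q, r)` is at most the length of `w_j` in `B(q, r + μ)`
(`edge_le_subcurve`). The `w_j` have no edge in common, so summing over `j` gives
`polyLengthIn p' (B(q, r)) ≤ polyLengthIn p (B(q, r + μ)) ≤ c (r + μ)`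
(`polyLengthIn_simplification_le`).

If `r ≥ μ`, this is at most `2 c r`. If `r < μ`, an edge `u_j` that meets `B(q, r)` has length at
most `2 r` in `B(q, r)`, and at least `μ` in `B(q, 2μ)` because its total length is at least `μ`.
So the length of `p'` in `B(q, r)` is at most `2 r / μ` times its length in `B(q, 2μ)`
(`segment_ball_ratio`), which is at most `c (2μ + μ)`; this gives `6 c r`.
-/

open MeasureTheory Metric Set
open scoped ENNReal NNReal

noncomputable section

/-! ### Projection onto a segment -/

/-- The nearest-point projection onto a nonempty complete convex set: a `1`-Lipschitz retraction
onto `K` that realises the distance to `K`. -/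
lemma exists_nearest_proj {E : Type*} [NormedAddCommGroup E] [InnerProductSpace ℝ E]
    {K : Set E} (hne : K.Nonempty) (hK : IsComplete K) (hconv : Convex ℝ K) :
    ∃ π : E → E, LipschitzWith 1 π ∧ (∀ x, π x ∈ K) ∧ (∀ x ∈ K, π x = x) ∧
      ∀ x, ∀ s ∈ K, dist x (π x) ≤ dist x s := by
  choose π hπK hπ using fun x => exists_norm_eq_iInf_of_complete_convex hne hK hconv x
  have hvar : ∀ x, ∀ w ∈ K, inner ℝ (x - π x) (w - π x) ≤ 0 := fun x =>
    (norm_eq_iInf_iff_real_inner_le_zero hconv (hπK x)).1 (hπ x)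
  have hmin : ∀ x, ∀ s ∈ K, dist x (π x) ≤ dist x s := by
    intro x s hs
    rw [dist_eq_norm, dist_eq_norm, hπ x]
    exact ciInf_le (f := fun w : K => ‖x - w‖)
      ⟨0, by rintro _ ⟨w, rfl⟩; exact norm_nonneg _⟩ ⟨s, hs⟩
  refine ⟨π, LipschitzWith.mk_one fun x y => ?_, hπK, fun x hx => ?_, hmin⟩
  · -- adding the two variational inequalities: `‖π x - π y‖² ≤ ⟪x - y, π x - π y⟫`
    have h1 := hvar x (π y) (hπK y)
    have h2 := hvar y (π x) (hπK x)
    have h3 : inner ℝ (x - y) (π x - π y) =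
        inner ℝ (π x - π y) (π x - π y) - inner ℝ (x - π x) (π y - π x)
          - inner ℝ (y - π y) (π x - π y) := by
      simp only [inner_sub_left, inner_sub_right]; ring
    have h4 := real_inner_le_norm (x - y) (π x - π y)
    rw [h3, real_inner_self_eq_norm_mul_norm] at h4
    rw [dist_eq_norm, dist_eq_norm]
    by_contra! hlt
    have : 0 < ‖π x - π y‖ := (norm_nonneg _).trans_lt hlt
    nlinarith
  · have := hmin x x hx
    rw [dist_self] at this
    exact (dist_le_zero.1 this).symm

/-- A preconnected subset of a segment containing both endpoints is the whole segment. -/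
lemma segment_subset_of_isPreconnected {E : Type*} [NormedAddCommGroup E] [InnerProductSpace ℝ E]
    {a b : E} (hab : a ≠ b) {S : Set E} (hS : IsPreconnected S) (hsub : S ⊆ segment ℝ a b)
    (ha : a ∈ S) (hb : b ∈ S) : segment ℝ a b ⊆ S := by
  intro x hx
  -- the coordinate `g` is injective on the segment, so the intermediate value theorem applies
  let g : E → ℝ := fun y => inner ℝ (y - a) (b - a)
  have hg : Continuous g := by fun_prop
  have hpos : 0 < inner ℝ (b - a) (b - a) := real_inner_self_pos.2 (sub_ne_zero.2 hab.symm)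
  have hgt : ∀ t : ℝ, g (a + t • (b - a)) = t * inner ℝ (b - a) (b - a) := by
    intro t; simp [g, inner_smul_left]
  rw [segment_eq_image'] at hx hsub
  obtain ⟨t, ht, rfl⟩ := hx
  have hmem : g (a + t • (b - a)) ∈ Icc (g a) (g b) := by
    have e0 : g a = 0 := by simp [g]
    rw [hgt, e0]
    exact ⟨mul_nonneg ht.1 hpos.le, mul_le_of_le_one_left hpos.le ht.2⟩
  obtain ⟨y, hy, hyg⟩ := hS.intermediate_value ha hb hg.continuousOn hmem
  obtain ⟨s, -, rfl⟩ := hsub hy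
  simp only [hgt] at hyg
  have : s = t := mul_right_cancel₀ hpos.ne' hyg
  exact this ▸ hy

/-! ### Simplified edges and the subcurves they replace -/

/-- The subcurve of `p` from vertex `i` to vertex `n` is connected and contains both vertices. -/
lemma isPreconnected_subcurve {d k : ℕ} (p : Fin (k + 1) → Pt d) (i n : Fin (k + 1))
    (hin : i < n) :
    IsPreconnected (⋃ l ∈ Finset.univ.filter (fun l : Fin k => i ≤ l.castSucc ∧ l.castSucc < n),
      segment ℝ (p l.castSucc) (p l.succ)) ∧
    (p i ∈ ⋃ l ∈ Finset.univ.filter (fun l : Fin k => i ≤ l.castSucc ∧ l.castSucc < n),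
      segment ℝ (p l.castSucc) (p l.succ)) ∧
    (p n ∈ ⋃ l ∈ Finset.univ.filter (fun l : Fin k => i ≤ l.castSucc ∧ l.castSucc < n),
      segment ℝ (p l.castSucc) (p l.succ)) := by
  induction n using Fin.induction with
  | zero => exact absurd hin (Fin.not_lt_zero i)
  | succ n ih =>
    have hle : i ≤ n.castSucc := Fin.le_castSucc_iff.2 hin
    have hset : (⋃ l ∈ Finset.univ.filter
          (fun l : Fin k => i ≤ l.castSucc ∧ l.castSucc < n.succ),
          segment ℝ (p l.castSucc) (p l.succ)) =
        (⋃ l ∈ Finset.univ.filter (fun l : Fin k => i ≤ l.castSucc ∧ l.castSucc < n.castSucc),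
          segment ℝ (p l.castSucc) (p l.succ)) ∪ segment ℝ (p n.castSucc) (p n.succ) := by
      ext x
      simp only [Finset.mem_filter, Finset.mem_univ, true_and, mem_iUnion, mem_union, exists_prop,
        Fin.castSucc_lt_succ_iff, Fin.castSucc_lt_castSucc_iff]
      constructor
      · rintro ⟨l, ⟨h1, h2⟩, hx⟩
        rcases h2.lt_or_eq with h | rfl
        · exact Or.inl ⟨l, ⟨h1, h⟩, hx⟩
        · exact Or.inr hx
      · rintro (⟨l, ⟨h1, h2⟩, hx⟩ | hx)
        · exact ⟨l, ⟨h1, h2.le⟩, hx⟩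
        · exact ⟨n, ⟨hle, le_rfl⟩, hx⟩
    have hconn := (convex_segment (𝕜 := ℝ) (p n.castSucc) (p n.succ)).isPreconnected
    rw [hset]
    rcases hle.lt_or_eq with hlt | heq
    · obtain ⟨h1, h2, h3⟩ := ih hlt
      exact ⟨h1.union _ h3 (left_mem_segment _ _ _) hconn, Or.inl h2,
        Or.inr (right_mem_segment _ _ _)⟩
    · have hemp : (⋃ l ∈ Finset.univ.filter
          (fun l : Fin k => i ≤ l.castSucc ∧ l.castSucc < n.castSucc),
          segment ℝ (p l.castSucc) (p l.succ)) = ∅ := by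
        ext x
        simp only [Finset.mem_filter, Finset.mem_univ, true_and, mem_iUnion, exists_prop,
          mem_empty_iff_false, iff_false]
        rintro ⟨l, ⟨h1, h2⟩, -⟩
        exact absurd (heq ▸ h1) (not_le.2 h2)
      rw [hemp, empty_union, heq]
      exact ⟨hconn, left_mem_segment _ _ _, right_mem_segment _ _ _⟩

/-- The length of a simplified edge inside a ball is at most the length of the subcurve it
replaces inside the ball enlarged by `μ`. -/
lemma edge_le_subcurve {d k : ℕ} {μ : ℝ} (hμ : 0 < μ) (p : Fin (k + 1) → Pt d)
    (i n : Fin (k + 1)) (hin : i < n) (hdist : μ ≤ dist (p i) (p n))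
    (hnear : ∀ l, i < l → l < n → dist (p l) (p i) ≤ μ) (q : Pt d) (r : ℝ) :
    μH[1] (segment ℝ (p i) (p n) ∩ closedBall q r) ≤
      ∑ l ∈ Finset.univ.filter (fun l : Fin k => i ≤ l.castSucc ∧ l.castSucc < n),
        μH[1] (segment ℝ (p l.castSucc) (p l.succ) ∩ closedBall q (r + μ)) := by
  have hab : p i ≠ p n := by
    intro h; rw [h, dist_self] at hdist; linarith
  have hcpt : IsCompact (segment ℝ (p i) (p n)) := by
    rw [segment_eq_image']
    exact isCompact_Icc.image (by fun_prop)
  have hsegconv := convex_segment (𝕜 := ℝ) (p i) (p n)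
  obtain ⟨π, hlip, hπK, hfix, hmin⟩ := exists_nearest_proj
    ⟨_, left_mem_segment ℝ (p i) (p n)⟩ hcpt.isComplete hsegconv
  obtain ⟨hconn, hi, hn⟩ := isPreconnected_subcurve p i n hin
  have hvert : ∀ l, i ≤ l → l ≤ n → p l ∈ cthickening μ (segment ℝ (p i) (p n)) := by
    intro l h1 h2
    rcases h1.eq_or_lt with rfl | h1
    · exact self_subset_cthickening _ (left_mem_segment _ _ _)
    rcases h2.eq_or_lt with rfl | h2
    · exact self_subset_cthickening _ (right_mem_segment _ _ _)
    exact mem_cthickening_of_dist_le _ (p i) _ _ (left_mem_segment _ _ _) (hnear l h1 h2)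
  have hmove : ∀ l : Fin k, i ≤ l.castSucc → l.castSucc < n →
      ∀ x ∈ segment ℝ (p l.castSucc) (p l.succ), dist x (π x) ≤ μ := by
    intro l h1 h2 x hx
    have hx' : x ∈ cthickening μ (segment ℝ (p i) (p n)) :=
      (hsegconv.cthickening μ).segment_subset (hvert _ h1 h2.le)
        (hvert _ (h1.trans (Fin.castSucc_lt_succ).le) (Fin.castSucc_lt_iff_succ_le.1 h2)) hx
    rw [hcpt.cthickening_eq_biUnion_closedBall hμ.le] at hx'
    simp only [mem_iUnion, mem_closedBall, exists_prop] at hx'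
    obtain ⟨s, hs, hxs⟩ := hx'
    exact (hmin x s hs).trans hxs
  have hcover := segment_subset_of_isPreconnected hab
    (hconn.image π hlip.continuous.continuousOn) (by rintro _ ⟨x, -, rfl⟩; exact hπK x)
    ⟨_, hi, hfix _ (left_mem_segment _ _ _)⟩ ⟨_, hn, hfix _ (right_mem_segment _ _ _)⟩
  have hsub : segment ℝ (p i) (p n) ∩ closedBall q r ⊆
      ⋃ l ∈ Finset.univ.filter (fun l : Fin k => i ≤ l.castSucc ∧ l.castSucc < n),
        π '' (segment ℝ (p l.castSucc) (p l.succ) ∩ closedBall q (r + μ)) := by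
    rintro y ⟨hy, hyq⟩
    obtain ⟨x, hx, rfl⟩ := hcover hy
    simp only [mem_iUnion, exists_prop] at hx ⊢
    obtain ⟨l, hl, hx⟩ := hx
    refine ⟨l, hl, x, ⟨hx, ?_⟩, rfl⟩
    simp only [Finset.mem_filter, Finset.mem_univ, true_and] at hl
    have h1 := hmove l hl.1 hl.2 x hx
    have h2 := dist_triangle x (π x) q
    rw [mem_closedBall] at hyq ⊢
    linarith
  refine (measure_mono hsub).trans ((measure_biUnion_finset_le _ _).trans
    (Finset.sum_le_sum fun l _ => ?_))
  simpa using hlip.hausdorffMeasure_image_le (d := 1) zero_le_one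
    (segment ℝ (p l.castSucc) (p l.succ) ∩ closedBall q (r + μ))

lemma polyLengthIn_simplification_le {d k m : ℕ} {μ : ℝ} (hμ : 0 < μ)
    {p : Fin (k + 1) → Pt d} {p' : Fin (m + 1) → Pt d}
    (h : IsSimplification μ p p') (q : Pt d) (r : ℝ) :
    polyLengthIn p' (closedBall q r) ≤ polyLengthIn p (closedBall q (r + μ)) := by
  obtain ⟨idx, hmono, -, -, hp', hfar, hnear⟩ := h
  unfold polyLengthIn
  have hdisj : ((Finset.univ : Finset (Fin m)) : Set (Fin m)).PairwiseDisjoint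
      (fun j => Finset.univ.filter
        (fun l : Fin k => idx j.castSucc ≤ l.castSucc ∧ l.castSucc < idx j.succ)) := by
    have key : ∀ j j' : Fin m, j < j' → Disjoint
        (Finset.univ.filter
          (fun l : Fin k => idx j.castSucc ≤ l.castSucc ∧ l.castSucc < idx j.succ))
        (Finset.univ.filter
          (fun l : Fin k => idx j'.castSucc ≤ l.castSucc ∧ l.castSucc < idx j'.succ)) := by
      intro j j' hjj
      rw [Finset.disjoint_left]
      simp only [Finset.mem_filter, Finset.mem_univ, true_and]
      rintro l ⟨-, h1⟩ ⟨h2, -⟩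
      have : idx j.succ ≤ idx j'.castSucc := hmono.monotone (Fin.succ_le_castSucc_iff.2 hjj)
      exact absurd (h1.trans_le this) (not_lt.2 h2)
    intro j _ j' _ hne
    rcases lt_or_gt_of_ne hne with hlt | hlt
    · exact key j j' hlt
    · exact (key j' j hlt).symm
  calc _ ≤ ∑ j : Fin m, ∑ l ∈ Finset.univ.filter
            (fun l : Fin k => idx j.castSucc ≤ l.castSucc ∧ l.castSucc < idx j.succ),
          μH[1] (segment ℝ (p l.castSucc) (p l.succ) ∩ closedBall q (r + μ)) := by
        refine Finset.sum_le_sum fun j _ => ?_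
        rw [hp', hp']
        exact edge_le_subcurve hμ p _ _ (hmono Fin.castSucc_lt_succ) (hfar j) (hnear j) q r
    _ ≤ _ := by
        rw [← Finset.sum_biUnion hdisj]
        exact Finset.sum_le_sum_of_subset (Finset.subset_univ _)

/-! ### Small balls, and the packing bound -/

/-- For a segment of length at least `μ`, the length inside a ball of radius `r ≤ μ` is at most
`2 r / μ` times the length inside the concentric ball of radius `2 μ`. -/
lemma segment_ball_ratio {d : ℕ} {μ r : ℝ} (hr : 0 < r) (hrμ : r ≤ μ) (a b q : Pt d)
    (hab : μ ≤ dist a b) :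
    μH[1] (segment ℝ a b ∩ closedBall q r) ≤
      ENNReal.ofReal (2 * r / μ) * μH[1] (segment ℝ a b ∩ closedBall q (2 * μ)) := by
  have hμ : 0 < μ := hr.trans_le hrμ
  set L := dist a b with hL
  have hLpos : 0 < L := hμ.trans_le hab
  have hLn : ‖b - a‖ = L := by rw [hL, dist_comm, dist_eq_norm]
  -- arc-length parametrisation of the line through `a` and `b`
  let γ : ℝ → Pt d := fun t => a + (t / L) • (b - a)
  have hγ : Isometry γ := Isometry.of_dist_eq fun s t => by
    simp only [γ, dist_add_left]
    rw [dist_eq_norm, ← sub_smul, norm_smul, hLn, ← sub_div, norm_div, Real.norm_of_nonneg hLpos.le,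
      div_mul_cancel₀ _ hLpos.ne', ← dist_eq_norm]
  have hseg : segment ℝ a b = γ '' Icc 0 L := by
    rw [segment_eq_image']
    ext x
    constructor
    · rintro ⟨t, ht, rfl⟩
      refine ⟨t * L, ⟨mul_nonneg ht.1 hLpos.le, mul_le_of_le_one_left hLpos.le ht.2⟩, ?_⟩
      simp only [γ]
      rw [mul_div_cancel_right₀ _ hLpos.ne']
    · rintro ⟨t, ht, rfl⟩
      exact ⟨t / L, ⟨div_nonneg ht.1 hLpos.le, (div_le_one hLpos).2 ht.2⟩, rfl⟩
  have hmeas : ∀ S : Set ℝ, μH[1] (γ '' S) = volume S := by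
    intro S
    rw [hγ.hausdorffMeasure_image (Or.inl zero_le_one), hausdorffMeasure_real]
  rcases (segment ℝ a b ∩ closedBall q r).eq_empty_or_nonempty with he | ⟨x, hx, hxq⟩
  · rw [he]; simp
  have hup : μH[1] (segment ℝ a b ∩ closedBall q r) ≤ ENNReal.ofReal (2 * r) := by
    rw [hseg, ← image_inter_preimage, hmeas]
    refine (Real.volume_le_diam _).trans (Metric.ediam_le fun s hs t ht => ?_)
    rw [edist_dist, ← hγ.dist_eq]
    refine ENNReal.ofReal_le_ofReal ?_
    have h1 : dist (γ s) q ≤ r := hs.2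
    have h2 : dist (γ t) q ≤ r := ht.2
    have := dist_triangle_right (γ s) (γ t) q
    linarith
  have hlow : ENNReal.ofReal μ ≤ μH[1] (segment ℝ a b ∩ closedBall q (2 * μ)) := by
    rw [hseg] at hx ⊢
    obtain ⟨t, ht, rfl⟩ := hx
    have hsub : Icc (max (t - μ) 0) (min (t + μ) L) ⊆ Icc 0 L ∩ γ ⁻¹' closedBall q (2 * μ) := by
      rintro s ⟨hs1, hs2⟩
      obtain ⟨h1, h2⟩ := max_le_iff.1 hs1
      obtain ⟨h3, h4⟩ := le_min_iff.1 hs2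
      refine ⟨⟨h2, h4⟩, ?_⟩
      have h5 : dist (γ s) (γ t) ≤ μ := by
        rw [hγ.dist_eq, Real.dist_eq, abs_le]
        constructor <;> linarith
      have h6 := dist_triangle (γ s) (γ t) q
      have h7 : dist (γ t) q ≤ r := hxq
      simp only [mem_preimage, mem_closedBall]
      linarith
    rw [← image_inter_preimage, hmeas]
    refine le_trans ?_ (measure_mono hsub)
    rw [Real.volume_Icc]
    refine ENNReal.ofReal_le_ofReal ?_
    have := ht.1
    have := ht.2
    rcases max_cases (t - μ) 0 with ⟨h, _⟩ | ⟨h, _⟩ <;>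
      rcases min_cases (t + μ) L with ⟨h', _⟩ | ⟨h', _⟩ <;> rw [h, h'] <;> linarith
  calc _ ≤ ENNReal.ofReal (2 * r) := hup
    _ = ENNReal.ofReal (2 * r / μ) * ENNReal.ofReal μ := by
        rw [← ENNReal.ofReal_mul (by positivity), div_mul_cancel₀ _ hμ.ne']
    _ ≤ _ := by gcongr

/-- A `μ`-simplification of a `c`-packed curve is `6c`-packed. -/
theorem simplification_packed {d k m : ℕ} (c μ : ℝ) (hμ : 0 < μ)
    (p : Fin (k + 1) → Pt d) (p' : Fin (m + 1) → Pt d)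
    (hc : IsCPacked c p) (h : IsSimplification μ p p') :
    IsCPacked (6 * c) p' := by
  intro q r hr
  rcases le_or_gt μ r with hμr | hrμ
  · refine (polyLengthIn_simplification_le hμ h q r).trans
      ((hc q (r + μ) (by linarith)).trans ?_)
    -- for `c < 0` both sides are `0`
    rcases le_or_gt 0 c with hc0 | hc0
    · exact ENNReal.ofReal_le_ofReal (by nlinarith)
    · rw [ENNReal.ofReal_of_nonpos (by nlinarith)]
      exact zero_le
  · calc polyLengthIn p' (closedBall q r)
        ≤ ENNReal.ofReal (2 * r / μ) * polyLengthIn p' (closedBall q (2 * μ)) := by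
          unfold polyLengthIn
          rw [Finset.mul_sum]
          obtain ⟨idx, -, -, -, hp', hfar, -⟩ := h
          refine Finset.sum_le_sum fun j _ => segment_ball_ratio hr hrμ.le _ _ q ?_
          rw [hp', hp']
          exact hfar j
      _ ≤ ENNReal.ofReal (2 * r / μ) * ENNReal.ofReal (c * (2 * μ + μ)) := by
          gcongr
          exact (polyLengthIn_simplification_le hμ h q _).trans (hc q _ (by linarith))
      _ = ENNReal.ofReal (6 * c * r) := by
          rw [← ENNReal.ofReal_mul (by positivity)]
          congr 1
          field_simp
          ring
end
end

section
/- Let P and Q be polygonal curves in ℝ^d, each of which is c-packed, such that every edge of P and every edge of Q has length at least μ > 0, and let n be the total number of edges of P and Q. Then for every δ > 0, the number of pairs (e, f), where e is an edge of P, f is an edge of Q, and the infimum distance between e and f is at most δ, is at most (9c + 6cδ/μ)·n. -/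
/-!
Charge every close pair `(e, f)` to its shorter edge, say `e`, of length `ℓ`. A point of `f` lies
within `ℓ / 2 + δ` of the midpoint of `e`, and since `f` has length at least `ℓ`, the part of `f`
within `ℓ` of that point has length at least `ℓ` (`ofReal_le_hausdorffMeasure_segment_inter`).
So each of the `m` edges `f` that charge `e` has length at least `ℓ` inside the ball of radius
`3ℓ/2 + δ` about that midpoint, and packedness gives `m ℓ ≤ c (3ℓ/2 + δ)` (`card_mul_le`), hence
`m ≤ 3c/2 + cδ/ℓ ≤ 3c/2 + cδ/μ` (`card_longer_close_le`). Summing over all `n` edges of both curves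
gives `(3c/2 + cδ/μ) n`, which is at most the claimed bound because `c ≥ 0` as soon as there is an
edge at all.
-/

open MeasureTheory Metric Set
open scoped ENNReal NNReal

noncomputable section

lemma exists_dist_le_of_segSetDist_le {d : ℕ} {a b a' b' : Pt d} {δ : ℝ}
    (h : segSetDist (segment ℝ a b) (segment ℝ a' b') ≤ δ) :
    ∃ x ∈ segment ℝ a b, ∃ y ∈ segment ℝ a' b', dist x y ≤ δ := by
  have hc : ∀ u v : Pt d, IsCompact (segment ℝ u v) := fun u v => by
    rw [segment_eq_image_lineMap]
    exact isCompact_Icc.image (by fun_prop)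
  have hK : IsCompact (Set.image2 dist (segment ℝ a b) (segment ℝ a' b')) := by
    rw [← Set.image_prod]
    exact ((hc a b).prod (hc a' b')).image continuous_dist
  have hne : (Set.image2 dist (segment ℝ a b) (segment ℝ a' b')).Nonempty :=
    Set.Nonempty.image2 ⟨a, left_mem_segment ℝ a b⟩ ⟨a', left_mem_segment ℝ a' b'⟩
  obtain ⟨x, hx, y, hy, hxy⟩ := hK.sInf_mem hne
  exact ⟨x, hx, y, hy, hxy.trans_le h⟩

lemma segSetDist_comm {d : ℕ} (e f : Set (Pt d)) : segSetDist e f = segSetDist f e := by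
  unfold segSetDist
  rw [Set.image2_swap]
  simp_rw [dist_comm]

/-- A segment of length at least `ℓ` issuing from `y` has length at least `ℓ` inside the ball of
radius `ℓ` about `y`. -/
lemma ofReal_le_of_le_dist {d : ℕ} {y a : Pt d} {ℓ : ℝ} (hℓ : 0 < ℓ) (h : ℓ ≤ dist y a) :
    ENNReal.ofReal ℓ ≤ μH[1] (segment ℝ y a ∩ closedBall y ℓ) := by
  have hpos : 0 < dist y a := hℓ.trans_le h
  set t : ℝ := ℓ / dist y a with ht
  have ht0 : 0 ≤ t := by positivity
  have ht1 : t ≤ 1 := (div_le_one hpos).2 h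
  set z : Pt d := AffineMap.lineMap y a t with hz
  have hdz : dist y z = ℓ := by
    rw [hz, dist_left_lineMap, Real.norm_of_nonneg ht0, ht, div_mul_cancel₀ _ hpos.ne']
  have hzs : z ∈ segment ℝ y a := by
    rw [segment_eq_image_lineMap]
    exact ⟨t, ⟨ht0, ht1⟩, rfl⟩
  have hsub : segment ℝ y z ⊆ segment ℝ y a ∩ closedBall y ℓ := by
    refine subset_inter ((convex_segment y a).segment_subset (left_mem_segment ℝ y a) hzs) ?_
    refine (convex_closedBall y ℓ).segment_subset (mem_closedBall_self hℓ.le) ?_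
    rw [mem_closedBall, dist_comm, hdz]
  calc ENNReal.ofReal ℓ = μH[1] (segment ℝ y z) := by
        rw [hausdorffMeasure_segment, edist_dist, hdz]
    _ ≤ _ := measure_mono hsub

/-- A segment of length at least `ℓ` has length at least `ℓ` inside the ball of radius `ℓ` about any
of its points `y`: either one of its two parts at `y` is that long, or the ball contains all of it. -/
lemma ofReal_le_hausdorffMeasure_segment_inter {d : ℕ} {a b y : Pt d} {ℓ : ℝ} (hℓ : 0 < ℓ)
    (h : ℓ ≤ dist a b) (hy : y ∈ segment ℝ a b) :
    ENNReal.ofReal ℓ ≤ μH[1] (segment ℝ a b ∩ closedBall y ℓ) := by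
  rcases le_or_gt ℓ (dist y a) with ha | ha
  · exact (ofReal_le_of_le_dist hℓ ha).trans (measure_mono (inter_subset_inter_left _
      ((convex_segment a b).segment_subset hy (left_mem_segment ℝ a b))))
  rcases le_or_gt ℓ (dist y b) with hb | hb
  · exact (ofReal_le_of_le_dist hℓ hb).trans (measure_mono (inter_subset_inter_left _
      ((convex_segment a b).segment_subset hy (right_mem_segment ℝ a b))))
  rw [inter_eq_left.2 ((convex_closedBall y ℓ).segment_subset
    (by rw [mem_closedBall, dist_comm]; exact ha.le)
    (by rw [mem_closedBall, dist_comm]; exact hb.le)), hausdorffMeasure_segment, edist_dist]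
  exact ENNReal.ofReal_le_ofReal h

/-- Packedness bounds the number of edges of length at least `ℓ` that meet a ball of radius `s`:
each of them has length at least `ℓ` inside the concentric ball of radius `s + ℓ`. -/
lemma card_mul_le {d k : ℕ} {c ℓ s : ℝ} {q : Fin (k + 1) → Pt d} (hq : IsCPacked c q)
    (hℓ : 0 < ℓ) (hs : 0 ≤ s) (x : Pt d) (S : Finset (Fin k)) (hS : S.Nonempty)
    (hlen : ∀ j ∈ S, ℓ ≤ dist (q j.castSucc) (q j.succ))
    (hnear : ∀ j ∈ S, ∃ y ∈ segment ℝ (q j.castSucc) (q j.succ), dist y x ≤ s) :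
    (S.card : ℝ) * ℓ ≤ c * (s + ℓ) := by
  have h1 : ENNReal.ofReal (S.card * ℓ) ≤ ENNReal.ofReal (c * (s + ℓ)) := by
    refine le_trans ?_ (hq x (s + ℓ) (by positivity))
    calc ENNReal.ofReal (S.card * ℓ) = ∑ j ∈ S, ENNReal.ofReal ℓ := by
          rw [Finset.sum_const, nsmul_eq_mul, ENNReal.ofReal_mul (by positivity),
            ENNReal.ofReal_natCast]
      _ ≤ ∑ j ∈ S, μH[1] (segment ℝ (q j.castSucc) (q j.succ) ∩ closedBall x (s + ℓ)) := by
          refine Finset.sum_le_sum fun j hj => ?_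
          obtain ⟨y, hy, hyx⟩ := hnear j hj
          refine (ofReal_le_hausdorffMeasure_segment_inter hℓ (hlen j hj) hy).trans
            (measure_mono (inter_subset_inter_right _ (closedBall_subset_closedBall' ?_)))
          linarith
      _ ≤ _ := Finset.sum_le_sum_of_subset (Finset.subset_univ S)
  have hpos : 0 < (S.card : ℝ) * ℓ := mul_pos (by exact_mod_cast hS.card_pos) hℓ
  -- The left side is positive, so `c * (s + ℓ)` cannot be a negative number truncated to `0`.
  exact (ENNReal.ofReal_le_ofReal_iff' .. |>.1 h1).resolve_right hpos.not_ge

lemma IsCPacked.nonneg {d k : ℕ} {c μ : ℝ} {q : Fin (k + 1) → Pt d} (hq : IsCPacked c q)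
    (hμ : 0 < μ) (hqe : ∀ j : Fin k, μ ≤ dist (q j.castSucc) (q j.succ)) (j : Fin k) :
    0 ≤ c := by
  have h := card_mul_le hq hμ le_rfl (q j.castSucc) {j} (Finset.singleton_nonempty j)
    (fun i _ => hqe i) (fun i hi => by
      rw [Finset.mem_singleton.1 hi]
      exact ⟨_, left_mem_segment ℝ _ _, (dist_self _).le⟩)
  rw [Finset.card_singleton, Nat.cast_one, one_mul, zero_add] at h
  nlinarith

/-- The number of edges of a packed curve that are at least as long as a given segment and within
`δ` of it. -/
lemma card_longer_close_le {d k : ℕ} {c μ δ : ℝ} {q : Fin (k + 1) → Pt d} (hq : IsCPacked c q)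
    (hc : 0 ≤ c) (hμ : 0 < μ) (hδ : 0 < δ) (a b : Pt d) (hab : μ ≤ dist a b)
    (S : Finset (Fin k))
    (hS : ∀ j ∈ S, segSetDist (segment ℝ a b) (segment ℝ (q j.castSucc) (q j.succ)) ≤ δ ∧
      dist a b ≤ dist (q j.castSucc) (q j.succ)) :
    (S.card : ℝ) ≤ 3 / 2 * c + c * δ / μ := by
  rcases S.eq_empty_or_nonempty with rfl | hne
  · rw [Finset.card_empty, Nat.cast_zero]
    positivity
  have hℓ : 0 < dist a b := hμ.trans_le hab
  have h := card_mul_le (s := dist a b / 2 + δ) hq hℓ (by positivity) (midpoint ℝ a b) S hne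
    (fun j hj => (hS j hj).2) (fun j hj => by
      obtain ⟨x, hx, y, hy, hxy⟩ := exists_dist_le_of_segSetDist_le (hS j hj).1
      refine ⟨y, hy, ?_⟩
      have hxm : x ∈ closedBall (midpoint ℝ a b) (dist a b / 2) := by
        refine (convex_closedBall _ _).segment_subset ?_ ?_ hx
        · rw [mem_closedBall, dist_left_midpoint, Real.norm_of_nonneg (by norm_num)]
          linarith
        · rw [mem_closedBall, dist_right_midpoint, Real.norm_of_nonneg (by norm_num)]
          linarith
      rw [mem_closedBall] at hxm
      rw [dist_comm] at hxy
      linarith [dist_triangle y x (midpoint ℝ a b)])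
  have h2 : (S.card : ℝ) ≤ 3 / 2 * c + c * δ / dist a b := by
    have e : 3 / 2 * c + c * δ / dist a b = c * (dist a b / 2 + δ + dist a b) / dist a b := by
      field_simp
      ring
    rw [e]
    exact (le_div_iff₀ hℓ).2 h
  have h3 : c * δ / dist a b ≤ c * δ / μ := by gcongr
  linarith

/-- For two `c`-packed curves all of whose edges have length at least `μ`,
the number of edge pairs at infimum distance at most `δ` is at most `(9c + 6cδ/μ) n`. -/
theorem close_edge_pairs_bound {d k₁ k₂ : ℕ} (c μ δ : ℝ) (hμ : 0 < μ) (hδ : 0 < δ)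
    (p : Fin (k₁ + 1) → Pt d) (q : Fin (k₂ + 1) → Pt d)
    (hp : IsCPacked c p) (hq : IsCPacked c q)
    (hpe : ∀ i : Fin k₁, μ ≤ dist (p i.castSucc) (p i.succ))
    (hqe : ∀ j : Fin k₂, μ ≤ dist (q j.castSucc) (q j.succ)) :
    (({ij : Fin k₁ × Fin k₂ |
        segSetDist (segment ℝ (p ij.1.castSucc) (p ij.1.succ))
          (segment ℝ (q ij.2.castSucc) (q ij.2.succ)) ≤ δ}).ncard : ℝ)
      ≤ (9 * c + 6 * c * δ / μ) * ((k₁ : ℝ) + (k₂ : ℝ)) := by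
  classical
  rcases Nat.eq_zero_or_pos (k₁ + k₂) with h0 | hpos
  · obtain ⟨rfl, rfl⟩ : k₁ = 0 ∧ k₂ = 0 := by omega
    rw [Set.eq_empty_of_isEmpty {ij : Fin 0 × Fin 0 | _}]
    simp
  have hc : 0 ≤ c := by
    rcases Nat.eq_zero_or_pos k₁ with h | h
    · exact hq.nonneg hμ hqe ⟨0, by omega⟩
    · exact hp.nonneg hμ hpe ⟨0, h⟩
  set D : Fin k₁ → Fin k₂ → ℝ := fun i j =>
    segSetDist (segment ℝ (p i.castSucc) (p i.succ)) (segment ℝ (q j.castSucc) (q j.succ)) with hD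
  set A : Fin k₁ → Finset (Fin k₂) := fun i => {j | D i j ≤ δ ∧
    dist (p i.castSucc) (p i.succ) ≤ dist (q j.castSucc) (q j.succ)} with hA
  set B : Fin k₂ → Finset (Fin k₁) := fun j => {i | D i j ≤ δ ∧
    dist (q j.castSucc) (q j.succ) ≤ dist (p i.castSucc) (p i.succ)} with hB
  have hAc : ∀ i, ((A i).card : ℝ) ≤ 3 / 2 * c + c * δ / μ := fun i =>
    card_longer_close_le hq hc hμ hδ _ _ (hpe i) _ fun j hj => by simpa [hA, hD] using hj
  have hBc : ∀ j, ((B j).card : ℝ) ≤ 3 / 2 * c + c * δ / μ := fun j =>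
    card_longer_close_le hp hc hμ hδ _ _ (hqe j) _ fun i hi => by
      rw [segSetDist_comm]
      simpa [hB, hD] using hi
  have hcover : {ij : Fin k₁ × Fin k₂ | D ij.1 ij.2 ≤ δ} ⊆
      (((Finset.univ.biUnion fun i => (A i).image fun j => (i, j)) ∪
        (Finset.univ.biUnion fun j => (B j).image fun i => (i, j)) :
          Finset (Fin k₁ × Fin k₂)) : Set (Fin k₁ × Fin k₂)) := by
    rintro ⟨i, j⟩ hij
    have hij' : D i j ≤ δ := hij
    rcases le_total (dist (p i.castSucc) (p i.succ)) (dist (q j.castSucc) (q j.succ)) with h | h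
    · simp [hA, hij', h]
    · simp [hB, hij', h]
  have hcard : {ij : Fin k₁ × Fin k₂ | D ij.1 ij.2 ≤ δ}.ncard ≤
      ∑ i, (A i).card + ∑ j, (B j).card := by
    refine (Set.ncard_le_ncard hcover (Finset.finite_toSet _)).trans ?_
    rw [Set.ncard_coe_finset]
    refine (Finset.card_union_le _ _).trans (add_le_add ?_ ?_)
    · exact Finset.card_biUnion_le.trans (Finset.sum_le_sum fun i _ => Finset.card_image_le)
    · exact Finset.card_biUnion_le.trans (Finset.sum_le_sum fun j _ => Finset.card_image_le)
  have hAs : ∑ i, ((A i).card : ℝ) ≤ k₁ * (3 / 2 * c + c * δ / μ) := by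
    simpa [mul_add] using Finset.sum_le_card_nsmul Finset.univ _ _ fun i _ => hAc i
  have hBs : ∑ j, ((B j).card : ℝ) ≤ k₂ * (3 / 2 * c + c * δ / μ) := by
    simpa [mul_add] using Finset.sum_le_card_nsmul Finset.univ _ _ fun j _ => hBc j
  calc (({ij : Fin k₁ × Fin k₂ | D ij.1 ij.2 ≤ δ}.ncard : ℕ) : ℝ)
      ≤ ∑ i, ((A i).card : ℝ) + ∑ j, ((B j).card : ℝ) := by exact_mod_cast hcard
    _ ≤ (3 / 2 * c + c * δ / μ) * ((k₁ : ℝ) + (k₂ : ℝ)) := by linarith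
    _ ≤ (9 * c + 6 * c * δ / μ) * ((k₁ : ℝ) + (k₂ : ℝ)) := by
        have e : 6 * c * δ / μ = 6 * (c * δ / μ) := by ring
        have h1 : 0 ≤ c * δ / μ := by positivity
        refine mul_le_mul_of_nonneg_right ?_ (by positivity)
        linarith
end
end

section
/- Let P and Q be c-packed polygonal curves in ℝ^d with a total of n edges, let δ > 0 and 0 < ε < 1, and let P' and Q' be εδ-simplifications of P and Q respectively. Then the number of pairs (e, f), where e is an edge of P', f is an edge of Q', and the infimum distance between e and f is at most δ, is at most (54c + 36c/ε)·n. -/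
/-!
Charge every close pair to its shorter edge `u`, of length `L ≥ εδ`. Each edge `[a, b]` charged
to `u` is at least as long as `u` and contains a point `x` near `u`. The piece of the original curve
that this edge replaces is connected, joins `a` to `b`, and by its last edge passes within
`εδ` of `x`; so it leaves the ball of radius `L / 2` around some point `y` with `dist y x ≤ εδ`,
and has length at least `L / 2` there (`le_length_of_piece`, `le_length_near_edge`).
The pieces belonging to different edges are disjoint and all these balls lie in one ball around an
endpoint of `u` of radius `3L/2 + 2δ + εδ`, so packedness leaves room for at most
`2c(3/2 + 2/ε + 1) = 5c + 4c/ε` edges charged to `u` (`card_charged_to_edge_le`). A simplification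
has no more edges than its original curve, which gives `(5c + 4c/ε) n` pairs in all.
-/

open MeasureTheory Metric Set
open scoped ENNReal NNReal

noncomputable section

/-! ### Length of a polygonal piece near a point of its simplified edge -/

/-- The vertex sequence of a polygonal curve, extended to all of `ℕ` by repeating the last vertex. -/
def extVertex {d k : ℕ} (p : Fin (k + 1) → Pt d) (i : ℕ) : Pt d :=
  p ⟨min i k, by omega⟩

lemma extVertex_val {d k : ℕ} (p : Fin (k + 1) → Pt d) (i : Fin (k + 1)) :
    extVertex p i = p i := by
  unfold extVertex
  congr 1
  ext
  simp only
  omega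

lemma polyLengthIn_eq_sum_range {d k : ℕ} (p : Fin (k + 1) → Pt d) (A : Set (Pt d)) :
    polyLengthIn p A = ∑ i ∈ Finset.range k,
      μH[1] (segment ℝ (extVertex p i) (extVertex p (i + 1)) ∩ A) := by
  rw [Finset.sum_range, polyLengthIn]
  refine Finset.sum_congr rfl fun i _ => ?_
  have h1 := extVertex_val p i.castSucc
  have h2 := extVertex_val p i.succ
  simp only [Fin.val_castSucc, Fin.val_succ] at h1 h2
  rw [h1, h2]

lemma isPreconnected_piece {d : ℕ} (P : ℕ → Pt d) (s t : ℕ) :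
    IsPreconnected (⋃ i ∈ Set.Ico s t, segment ℝ (P i) (P (i + 1))) := by
  refine IsPreconnected.biUnion_of_chain Set.ordConnected_Ico
    (fun n _ => (convex_segment _ _).isPreconnected) fun n _ _ => ⟨P (n + 1), ?_, ?_⟩
  · exact right_mem_segment ℝ _ _
  · exact left_mem_segment ℝ _ _

/-- A polygonal piece through `y` whose endpoints are at distance at least `L` has length at least
`L / 2` in the ball `B(y, L / 2)`: one endpoint lies outside the open ball, and the 1-Lipschitz
function `dist · y` maps the part of the piece inside the ball onto `[0, L / 2]`. -/
lemma le_length_of_piece {d : ℕ} (P : ℕ → Pt d) {s t : ℕ} (hst : s < t) {L : ℝ}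
    (hL : L ≤ dist (P s) (P t)) {y : Pt d}
    (hy : ∃ i ∈ Set.Ico s t, y ∈ segment ℝ (P i) (P (i + 1))) :
    ENNReal.ofReal (L / 2) ≤ ∑ i ∈ Finset.Ico s t,
      μH[1] (segment ℝ (P i) (P (i + 1)) ∩ closedBall y (L / 2)) := by
  set U : Set (Pt d) := ⋃ i ∈ Set.Ico s t, segment ℝ (P i) (P (i + 1)) with hU
  have hyU : y ∈ U := by
    obtain ⟨i, hi, h⟩ := hy
    exact Set.mem_biUnion hi h
  have hsU : P s ∈ U := Set.mem_biUnion (x := s) ⟨le_rfl, hst⟩ (left_mem_segment ℝ _ _)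
  have htU : P t ∈ U := by
    refine Set.mem_biUnion (x := t - 1) ⟨by omega, by omega⟩ ?_
    rw [show t - 1 + 1 = t by omega]
    exact right_mem_segment ℝ _ _
  have hfar : ∃ w ∈ U, L / 2 ≤ dist w y := by
    by_contra! h
    have h1 := h _ hsU
    have h2 := h _ htU
    have h3 := dist_triangle_right (P s) (P t) y
    linarith
  obtain ⟨w, hw, hwL⟩ := hfar
  have hlip : LipschitzWith 1 (fun z : Pt d => dist z y) := LipschitzWith.dist_left y
  have hconn : IsPreconnected ((fun z : Pt d => dist z y) '' U) :=
    (isPreconnected_piece P s t).image _ hlip.continuous.continuousOn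
  have hIcc : Set.Icc 0 (L / 2) ⊆ ⋃ i ∈ Finset.Ico s t, (fun z : Pt d => dist z y) ''
      (segment ℝ (P i) (P (i + 1)) ∩ closedBall y (L / 2)) := by
    intro r hr
    obtain ⟨z, hz, rfl⟩ := hconn.Icc_subset ⟨y, hyU, dist_self y⟩ ⟨w, hw, rfl⟩
      ⟨hr.1, hr.2.trans hwL⟩
    obtain ⟨i, hi, hzi⟩ := Set.mem_iUnion₂.1 hz
    refine Set.mem_iUnion₂.2 ⟨i, ?_, z, ⟨hzi, hr.2⟩, rfl⟩
    simpa using hi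
  calc ENNReal.ofReal (L / 2) = μH[1] (Set.Icc (0 : ℝ) (L / 2)) := by
        rw [hausdorffMeasure_real, Real.volume_Icc, sub_zero]
    _ ≤ μH[1] (⋃ i ∈ Finset.Ico s t, (fun z : Pt d => dist z y) ''
          (segment ℝ (P i) (P (i + 1)) ∩ closedBall y (L / 2))) := measure_mono hIcc
    _ ≤ ∑ i ∈ Finset.Ico s t, μH[1] ((fun z : Pt d => dist z y) ''
          (segment ℝ (P i) (P (i + 1)) ∩ closedBall y (L / 2))) := measure_biUnion_finset_le _ _
    _ ≤ _ := by
        refine Finset.sum_le_sum fun i _ => ?_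
        simpa using hlip.hausdorffMeasure_image_le (d := 1) zero_le_one
          (segment ℝ (P i) (P (i + 1)) ∩ closedBall y (L / 2))

/-- If the last vertex before `P t` is within `μ` of `P s`, every point `x` of the edge `[P s, P t]`
is within `μ` of the corresponding point of the last edge of the piece. -/
lemma le_length_near_edge {d : ℕ} (P : ℕ → Pt d) {s t : ℕ} (hst : s < t) {L μ : ℝ} (hμ : 0 ≤ μ)
    (hL : L ≤ dist (P s) (P t)) (hbtw : ∀ l, s < l → l < t → dist (P l) (P s) ≤ μ)
    {x : Pt d} (hx : x ∈ segment ℝ (P s) (P t)) :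
    ENNReal.ofReal (L / 2) ≤ ∑ i ∈ Finset.Ico s t,
      μH[1] (segment ℝ (P i) (P (i + 1)) ∩ closedBall x (L / 2 + μ)) := by
  obtain ⟨α, β, hα, hβ, hαβ, rfl⟩ := hx
  have hlast : dist (P (t - 1)) (P s) ≤ μ := by
    rcases (show s ≤ t - 1 by omega).eq_or_lt with h | h
    · rw [← h, dist_self]
      exact hμ
    · exact hbtw _ h (by omega)
  have hy : α • P (t - 1) + β • P t ∈ segment ℝ (P (t - 1)) (P (t - 1 + 1)) := by
    rw [show t - 1 + 1 = t by omega]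
    exact ⟨α, β, hα, hβ, hαβ, rfl⟩
  have hdist : dist (α • P (t - 1) + β • P t) (α • P s + β • P t) ≤ μ := by
    rw [dist_add_right, dist_smul₀, Real.norm_of_nonneg hα]
    nlinarith [dist_nonneg (x := P (t - 1)) (y := P s)]
  refine (le_length_of_piece P hst hL ⟨t - 1, ⟨by omega, by omega⟩, hy⟩).trans ?_
  refine Finset.sum_le_sum fun i _ => measure_mono (Set.inter_subset_inter_right _ ?_)
  exact closedBall_subset_closedBall' (by linarith)

/-! ### Packing bounds for the edges of a simplification -/

/-- The pieces belonging to the edges in `J` are disjoint, so each of them contributes `L / 2` to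
the length of the original curve inside a ball meeting all these edges. -/
lemma card_mul_le_of_edges_near {d k m : ℕ} {c μ L ρ : ℝ} (hμ : 0 ≤ μ) (hL : 0 < L) (hρ : 0 ≤ ρ)
    (p : Fin (k + 1) → Pt d) (p' : Fin (m + 1) → Pt d) (hp : IsCPacked c p)
    (hp' : IsSimplification μ p p') (z : Pt d) (J : Finset (Fin m))
    (hlen : ∀ j ∈ J, L ≤ dist (p' j.castSucc) (p' j.succ))
    (hnear : ∀ j ∈ J, ∃ x ∈ segment ℝ (p' j.castSucc) (p' j.succ), dist x z ≤ ρ) :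
    (J.card : ℝ≥0∞) * ENNReal.ofReal (L / 2) ≤ ENNReal.ofReal (c * (L / 2 + μ + ρ)) := by
  obtain ⟨idx, hmono, -, -, hval, -, hbtw⟩ := hp'
  set R := L / 2 + μ + ρ with hR
  refine le_trans ?_ (hp z R (by positivity))
  rw [polyLengthIn_eq_sum_range]
  set w : ℕ → ℝ≥0∞ := fun i =>
    μH[1] (segment ℝ (extVertex p i) (extVertex p (i + 1)) ∩ closedBall z R) with hw
  have hdisj : (J : Set (Fin m)).PairwiseDisjoint
      fun j => Finset.Ico (idx j.castSucc : ℕ) (idx j.succ : ℕ) := by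
    -- for `i < j`, the piece of edge `i` ends at or before the start of the piece of edge `j`
    have key : ∀ i j : Fin m, i < j → (idx i.succ : ℕ) ≤ idx j.castSucc := fun i j h =>
      hmono.monotone (Fin.succ_le_castSucc_iff.2 h)
    intro i _ j _ hij
    rw [Function.onFun, Finset.disjoint_left]
    intro a ha hb
    rw [Finset.mem_Ico] at ha hb
    rcases lt_or_gt_of_ne hij with h | h
    · have := key i j h
      omega
    · have := key j i h
      omega
  have hpiece : ∀ j ∈ J, ENNReal.ofReal (L / 2) ≤
      ∑ i ∈ Finset.Ico (idx j.castSucc : ℕ) (idx j.succ : ℕ), w i := by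
    intro j hj
    obtain ⟨x, hx, hxz⟩ := hnear j hj
    have hl := hlen j hj
    rw [hval, hval, ← extVertex_val p, ← extVertex_val p] at hx hl
    refine (le_length_near_edge (extVertex p) (hmono j.castSucc_lt_succ) hμ hl ?_ hx).trans ?_
    · intro l h1 h2
      have := hbtw j ⟨l, h2.trans (idx j.succ).2⟩ h1 h2
      rw [← extVertex_val p, ← extVertex_val p] at this
      exact this
    · refine Finset.sum_le_sum fun i _ => measure_mono (Set.inter_subset_inter_right _ ?_)
      exact closedBall_subset_closedBall' (by linarith)
  calc (J.card : ℝ≥0∞) * ENNReal.ofReal (L / 2) = ∑ j ∈ J, ENNReal.ofReal (L / 2) := by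
        rw [Finset.sum_const, nsmul_eq_mul]
    _ ≤ ∑ j ∈ J, ∑ i ∈ Finset.Ico (idx j.castSucc : ℕ) (idx j.succ : ℕ), w i :=
        Finset.sum_le_sum hpiece
    _ = ∑ i ∈ J.biUnion fun j => Finset.Ico (idx j.castSucc : ℕ) (idx j.succ : ℕ), w i :=
        (Finset.sum_biUnion hdisj).symm
    _ ≤ ∑ i ∈ Finset.range k, w i := by
        refine Finset.sum_le_sum_of_subset fun i hi => ?_
        obtain ⟨j, -, hj⟩ := Finset.mem_biUnion.1 hi
        rw [Finset.mem_Ico] at hj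
        have := (idx j.succ).2
        rw [Finset.mem_range]
        omega

lemma IsSimplification.le_dist {d k m : ℕ} {μ : ℝ} {p : Fin (k + 1) → Pt d}
    {p' : Fin (m + 1) → Pt d} (h : IsSimplification μ p p') (j : Fin m) :
    μ ≤ dist (p' j.castSucc) (p' j.succ) := by
  obtain ⟨idx, -, -, -, hval, hlen, -⟩ := h
  rw [hval, hval]
  exact hlen j

lemma IsSimplification.edges_le {d k m : ℕ} {μ : ℝ} {p : Fin (k + 1) → Pt d}
    {p' : Fin (m + 1) → Pt d} (h : IsSimplification μ p p') : m ≤ k := by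
  obtain ⟨idx, hmono, -⟩ := h
  simpa using Fintype.card_le_of_injective idx hmono.injective

/-- A curve with at least one edge and a `μ`-simplification for some `μ > 0` has positive length,
so its packedness constant is not negative. -/
lemma nonneg_or_eq_zero {d k m : ℕ} {c μ : ℝ} (hμ : 0 < μ) (p : Fin (k + 1) → Pt d)
    (p' : Fin (m + 1) → Pt d) (hp : IsCPacked c p) (hp' : IsSimplification μ p p') :
    0 ≤ c ∨ k = 0 := by
  by_contra! h
  obtain ⟨hc, hk⟩ := h
  have hm : 0 < m := by
    obtain ⟨idx, -, h0, hl, -⟩ := hp'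
    rw [Nat.pos_iff_ne_zero]
    rintro rfl
    have : (0 : Fin (k + 1)) = Fin.last k := by rw [← h0, ← hl]; rfl
    exact hk (congrArg Fin.val this).symm
  set j : Fin m := ⟨0, hm⟩
  have hb := card_mul_le_of_edges_near (L := μ) hμ.le hμ le_rfl p p' hp hp'
    (p' j.castSucc) {j} (by simpa using hp'.le_dist j)
    (by simpa using left_mem_segment ℝ (p' j.castSucc) (p' j.succ))
  rw [ENNReal.ofReal_of_nonpos (p := c * _) (by nlinarith)] at hb
  simp at hb
  linarith

/-! ### Charging close pairs to their shorter edge -/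

lemma exists_dist_lt_of_segSetDist_le {d : ℕ} {δ : ℝ} (hδ : 0 < δ) {a b a' b' : Pt d}
    (h : segSetDist (segment ℝ a b) (segment ℝ a' b') ≤ δ) :
    ∃ x ∈ segment ℝ a b, ∃ y ∈ segment ℝ a' b', dist x y < 2 * δ := by
  have hne : (Set.image2 dist (segment ℝ a b) (segment ℝ a' b')).Nonempty :=
    ⟨_, Set.mem_image2_of_mem (left_mem_segment ℝ a b) (left_mem_segment ℝ a' b')⟩
  obtain ⟨r, ⟨x, hx, y, hy, rfl⟩, hr⟩ :=
    exists_lt_of_csInf_lt hne (lt_of_le_of_lt h (by linarith : δ < 2 * δ))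
  exact ⟨x, hx, y, hy, hr⟩

/-- The edges charged to one edge `[a, b]` of length at least `εδ` are at least as long as it and
have a point at distance less than `2δ` from it (the factor 2 makes it unnecessary that the infimum
distance is attained). They all meet the ball of radius `dist a b + 2δ` around `a`. -/
lemma card_charged_to_edge_le {d k m : ℕ} {c δ ε : ℝ} (hδ : 0 < δ) (hε₀ : 0 < ε) (hc : 0 ≤ c)
    (p : Fin (k + 1) → Pt d) (p' : Fin (m + 1) → Pt d) (hp : IsCPacked c p)
    (hp' : IsSimplification (ε * δ) p p') {a b : Pt d} (hab : ε * δ ≤ dist a b)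
    (J : Finset (Fin m)) (hlen : ∀ j ∈ J, dist a b ≤ dist (p' j.castSucc) (p' j.succ))
    (hnear : ∀ j ∈ J, ∃ x ∈ segment ℝ (p' j.castSucc) (p' j.succ),
      ∃ y ∈ segment ℝ a b, dist x y < 2 * δ) :
    (J.card : ℝ) ≤ 5 * c + 4 * c / ε := by
  have hμ : 0 < ε * δ := by positivity
  set L := dist a b with hLdef
  have hL : 0 < L := hμ.trans_le hab
  have hb := card_mul_le_of_edges_near (ρ := L + 2 * δ) hμ.le hL (by positivity) p p' hp hp' a J
    hlen (by
      intro j hj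
      obtain ⟨x, hx, y, hy, hxy⟩ := hnear j hj
      refine ⟨x, hx, ?_⟩
      have hya : dist y a ≤ L := by
        have hsub : segment ℝ a b ⊆ closedBall a L := (convex_closedBall a L).segment_subset
          (mem_closedBall_self hL.le) (by rw [mem_closedBall, dist_comm])
        exact hsub hy
      linarith [dist_triangle x y a])
  rw [← ENNReal.ofReal_natCast, ← ENNReal.ofReal_mul (by positivity),
    ENNReal.ofReal_le_ofReal_iff (by positivity)] at hb
  have hδL : δ ≤ L / ε := by
    rw [le_div_iff₀ hε₀]
    linarith
  have hle : (J.card : ℝ) * (L / 2) ≤ (5 * c + 4 * c / ε) * (L / 2) := by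
    calc (J.card : ℝ) * (L / 2) ≤ c * (L / 2 + ε * δ + (L + 2 * δ)) := hb
      _ ≤ c * (L / 2 + L + (L + 2 * (L / ε))) := by gcongr
      _ = (5 * c + 4 * c / ε) * (L / 2) := by ring
  exact le_of_mul_le_mul_right hle (by positivity)

open Classical in
/-- Summing over the edges of `q'` the number of close edges of `p'` charged to them. -/
lemma card_charged_pairs_le {d k₁ k₂ m₁ m₂ : ℕ} {c δ ε : ℝ} (hδ : 0 < δ) (hε₀ : 0 < ε) (hc : 0 ≤ c)
    (p : Fin (k₁ + 1) → Pt d) (q : Fin (k₂ + 1) → Pt d)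
    (p' : Fin (m₁ + 1) → Pt d) (q' : Fin (m₂ + 1) → Pt d) (hp : IsCPacked c p)
    (hp' : IsSimplification (ε * δ) p p') (hq' : IsSimplification (ε * δ) q q')
    (S : Finset (Fin m₁ × Fin m₂))
    (hlen : ∀ ij ∈ S, dist (q' ij.2.castSucc) (q' ij.2.succ) ≤
      dist (p' ij.1.castSucc) (p' ij.1.succ))
    (hnear : ∀ ij ∈ S, ∃ x ∈ segment ℝ (p' ij.1.castSucc) (p' ij.1.succ),
      ∃ y ∈ segment ℝ (q' ij.2.castSucc) (q' ij.2.succ), dist x y < 2 * δ) :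
    (S.card : ℝ) ≤ (5 * c + 4 * c / ε) * k₂ := by
  have hK : 0 ≤ 5 * c + 4 * c / ε := by positivity
  have hcard : S.card = ∑ j : Fin m₂, (Finset.univ.filter fun i => (i, j) ∈ S).card := by
    rw [Finset.card_eq_sum_card_fiberwise (f := Prod.snd) (t := Finset.univ) (fun _ _ => by simp)]
    refine Finset.sum_congr rfl fun j _ => ?_
    refine Finset.card_bij' (fun ij _ => ij.1) (fun i _ => (i, j)) ?_ ?_ ?_ ?_
    · rintro ⟨i, j'⟩ h
      simp only [Finset.mem_filter] at h
      obtain ⟨h, rfl⟩ := h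
      simpa using h
    · intro i h
      simpa using h
    · rintro ⟨i, j'⟩ h
      simp only [Finset.mem_filter] at h
      rw [h.2]
    · intro i _
      rfl
  calc (S.card : ℝ) = ∑ j : Fin m₂, ((Finset.univ.filter fun i => (i, j) ∈ S).card : ℝ) := by
        rw [hcard, Nat.cast_sum]
    _ ≤ ∑ j : Fin m₂, (5 * c + 4 * c / ε) := by
        refine Finset.sum_le_sum fun j _ => ?_
        refine card_charged_to_edge_le hδ hε₀ hc p p' hp hp' (hq'.le_dist j) _ ?_ ?_
        · intro i hi
          exact hlen (i, j) (by simpa using hi)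
        · intro i hi
          exact hnear (i, j) (by simpa using hi)
    _ = (5 * c + 4 * c / ε) * m₂ := by
        rw [Finset.sum_const, Finset.card_univ, Fintype.card_fin, nsmul_eq_mul, mul_comm]
    _ ≤ _ := by
        gcongr
        exact hq'.edges_le

/-- For `εδ`-simplifications of two `c`-packed curves with `n` edges in
total, the number of pairs of simplified edges at infimum distance at most `δ` is at most
`(54c + 36c/ε) n`. -/
theorem close_simplified_edge_pairs_bound {d k₁ k₂ m₁ m₂ : ℕ} (c δ ε : ℝ)
    (hδ : 0 < δ) (hε₀ : 0 < ε) (hε₁ : ε < 1)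
    (p : Fin (k₁ + 1) → Pt d) (q : Fin (k₂ + 1) → Pt d)
    (p' : Fin (m₁ + 1) → Pt d) (q' : Fin (m₂ + 1) → Pt d)
    (hp : IsCPacked c p) (hq : IsCPacked c q)
    (hp' : IsSimplification (ε * δ) p p') (hq' : IsSimplification (ε * δ) q q') :
    (({ij : Fin m₁ × Fin m₂ |
        segSetDist (segment ℝ (p' ij.1.castSucc) (p' ij.1.succ))
          (segment ℝ (q' ij.2.castSucc) (q' ij.2.succ)) ≤ δ}).ncard : ℝ)
      ≤ (54 * c + 36 * c / ε) * ((k₁ : ℝ) + (k₂ : ℝ)) := by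
  classical
  have hμ : 0 < ε * δ := by positivity
  by_cases hc : 0 ≤ c
  swap
  · have h1 : k₁ = 0 := (nonneg_or_eq_zero hμ p p' hp hp').resolve_left hc
    have h2 : k₂ = 0 := (nonneg_or_eq_zero hμ q q' hq hq').resolve_left hc
    have hm : m₁ = 0 := by
      have := hp'.edges_le
      omega
    subst h1 h2 hm
    rw [Set.eq_empty_of_isEmpty {ij : Fin 0 × Fin m₂ | _}]
    simp
  set S : Finset (Fin m₁ × Fin m₂) := Finset.univ.filter fun ij =>
    segSetDist (segment ℝ (p' ij.1.castSucc) (p' ij.1.succ))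
      (segment ℝ (q' ij.2.castSucc) (q' ij.2.succ)) ≤ δ with hS
  have hSet : {ij : Fin m₁ × Fin m₂ |
        segSetDist (segment ℝ (p' ij.1.castSucc) (p' ij.1.succ))
          (segment ℝ (q' ij.2.castSucc) (q' ij.2.succ)) ≤ δ} = (S : Set (Fin m₁ × Fin m₂)) := by
    ext ij
    simp [hS]
  rw [hSet, Set.ncard_coe_finset]
  have hnear : ∀ ij ∈ S, ∃ x ∈ segment ℝ (p' ij.1.castSucc) (p' ij.1.succ),
      ∃ y ∈ segment ℝ (q' ij.2.castSucc) (q' ij.2.succ), dist x y < 2 * δ := fun ij hij =>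
    exists_dist_lt_of_segSetDist_le hδ (Finset.mem_filter.1 hij).2
  set short : Fin m₁ × Fin m₂ → Prop := fun ij =>
    dist (q' ij.2.castSucc) (q' ij.2.succ) ≤ dist (p' ij.1.castSucc) (p' ij.1.succ) with hshort
  have hA := card_charged_pairs_le hδ hε₀ hc p q p' q' hp hp' hq' (S.filter short)
    (fun ij h => (Finset.mem_filter.1 h).2) (fun ij h => hnear ij (Finset.mem_filter.1 h).1)
  have hB := card_charged_pairs_le hδ hε₀ hc q p q' p' hq hq' hp'
    ((S.filter fun ij => ¬ short ij).map (Equiv.prodComm _ _).toEmbedding)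
    (by
      intro ij h
      obtain ⟨ij', h', rfl⟩ := Finset.mem_map.1 h
      exact (not_le.1 (Finset.mem_filter.1 h').2).le)
    (by
      intro ij h
      obtain ⟨ij', h', rfl⟩ := Finset.mem_map.1 h
      obtain ⟨x, hx, y, hy, hxy⟩ := hnear ij' (Finset.mem_filter.1 h').1
      exact ⟨y, hy, x, hx, by rwa [dist_comm]⟩)
  rw [Finset.card_map] at hB
  have hsum : (S.card : ℝ) = (S.filter short).card + (S.filter fun ij => ¬ short ij).card := by
    exact_mod_cast (Finset.card_filter_add_card_filter_not (s := S) short).symm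
  calc (S.card : ℝ) ≤ (5 * c + 4 * c / ε) * ((k₁ : ℝ) + k₂) := by linarith
    _ ≤ (54 * c + 36 * c / ε) * ((k₁ : ℝ) + k₂) := by gcongr <;> norm_num
end
end

section
/- Let γ : [0,1] → ℝ^d be a continuous curve that is κ-straight, i.e., for all 0 ≤ s ≤ t ≤ 1 the total variation of γ on [s, t] is at most κ·dist(γ(s), γ(t)). Then γ is 2κ-packed: for every point q ∈ ℝ^d and every r > 0, the total variation of γ on the set { t ∈ [0,1] : γ(t) ∈ B(q, r) } is at most 2κ·r, where B(q, r) is the closed ball of radius r around q. -/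
/-!
Take an increasing sequence of parameters whose images all lie in the ball `B(q, r)`. The polygonal
length along it is at most the variation of `γ` between its first and last parameters. By
straightness this is at most `κ` times the distance of two points of `B(q, r)`, and that distance is
at most `2 * r`.
-/

open MeasureTheory Metric Set
open scoped ENNReal NNReal

noncomputable section

/-- A continuous `κ`-straight curve is `2κ`-packed. -/
theorem kappaStraight_packed {d : ℕ} (κ : ℝ) (γ : ℝ → Pt d)
    (hcont : ContinuousOn γ (Icc 0 1))
    (hstraight : ∀ s t : ℝ, 0 ≤ s → s ≤ t → t ≤ 1 →
      eVariationOn γ (Icc s t) ≤ ENNReal.ofReal (κ * dist (γ s) (γ t))) :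
    ∀ (q : Pt d) (r : ℝ), 0 < r →
      eVariationOn γ {t ∈ Icc (0 : ℝ) 1 | γ t ∈ closedBall q r}
        ≤ ENNReal.ofReal (2 * κ * r) := by
  intro q r hr
  refine iSup_le fun ⟨n, u, hu, hmem⟩ => ?_
  -- Only the two extreme parameters need to lie in the ball.
  obtain ⟨⟨h0, -⟩, hb0⟩ := hmem 0
  obtain ⟨⟨-, h1⟩, hb1⟩ := hmem n
  have hsum : ∑ i ∈ Finset.range n, edist (γ (u (i + 1))) (γ (u i)) ≤
      eVariationOn γ (Icc (u 0) (u n)) := by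
    rw [Finset.range_eq_Ico]
    exact eVariationOn.sum_le_of_monotoneOn_Icc (hu.monotoneOn _)
      fun i hi => ⟨hu hi.1, hu hi.2⟩
  refine hsum.trans ((hstraight _ _ h0 (hu n.zero_le) h1).trans ?_)
  have hdist : dist (γ (u 0)) (γ (u n)) ≤ 2 * r := by
    have := dist_triangle_right (γ (u 0)) (γ (u n)) q
    rw [mem_closedBall] at hb0 hb1
    linarith
  rcases le_total 0 κ with hκ | hκ
  · apply ENNReal.ofReal_le_ofReal
    nlinarith [mul_le_mul_of_nonneg_left hdist hκ]
  · -- For `κ ≤ 0` the left-hand side is truncated to `0`.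
    rw [ENNReal.ofReal_of_nonpos (mul_nonpos_of_nonpos_of_nonneg hκ dist_nonneg)]
    exact zero_le
end
end

section
/- Let P be a φ-low-density polygonal curve in ℝ^d and let Q be an axis-parallel cube with side length ℓ > 0. Then the number of edges of P of length at least ℓ that intersect Q is at most ⌈√d / 2⌉^d · φ. -/
/-!
Put `N = ⌈√d / 2⌉`. Subdividing the cube into `N ^ d` congruent subcubes of side `ℓ / N`, every point
of the cube is within `√d * ℓ / (2 * N) ≤ ℓ` of the centre of some subcube. So the balls of radius
`ℓ` about the `N ^ d` centres cover the cube, an edge meeting the cube meets one of these balls, and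
low density bounds by `φ` the number of long edges meeting each ball. For `d = 0` we have `N = 0`, but
there is exactly one (empty) index function, in accordance with `0 ^ 0 = 1`.
-/

open MeasureTheory Metric Set
open scoped ENNReal NNReal

noncomputable section

/-- The midpoints of the `N` unit intervals partitioning `[0, N]` are `1 / 2`-dense in it. -/
lemma exists_fin_abs_sub_midpoint_le {N : ℕ} (hN : 0 < N) {t : ℝ} (h0 : 0 ≤ t) (h1 : t ≤ N) :
    ∃ j : Fin N, |t - ((j : ℕ) + 1 / 2)| ≤ 1 / 2 := by
  rcases h1.lt_or_eq with h | h
  · refine ⟨⟨⌊t⌋₊, (Nat.floor_lt h0).2 h⟩, abs_le.2 ⟨?_, ?_⟩⟩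
    · linarith [Nat.floor_le h0]
    · linarith [Nat.lt_floor_add_one t]
  · refine ⟨⟨N - 1, by omega⟩, ?_⟩
    have : ((N - 1 : ℕ) : ℝ) = N - 1 := by simp [Nat.cast_sub (Nat.one_le_iff_ne_zero.2 hN.ne')]
    simp only [this, h]
    rw [abs_le]; constructor <;> linarith

/-- The centre of the subcube with index `f` when `x + [0, ℓ]^d` is cut into `N ^ d` subcubes. -/
def subcubeCenter {d : ℕ} (x : Pt d) (ℓ : ℝ) (N : ℕ) (f : Fin d → Fin N) : Pt d :=
  WithLp.toLp 2 fun i => x i + ((f i : ℕ) + 1 / 2) * (ℓ / N)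

lemma exists_dist_subcubeCenter_le {d : ℕ} (x : Pt d) {ℓ : ℝ} (hℓ : 0 < ℓ) {N : ℕ}
    (hN : Real.sqrt d / 2 ≤ N) {y : Pt d} (hy : y ∈ cube x ℓ) :
    ∃ f : Fin d → Fin N, dist y (subcubeCenter x ℓ N f) ≤ ℓ := by
  have hpos : Fin d → 0 < N := fun i => by
    have hd : (0 : ℝ) < d := by exact_mod_cast i.pos
    have := Real.sqrt_pos.2 hd
    have : (0 : ℝ) < N := by linarith
    exact_mod_cast this
  have key : ∀ i, ∃ j : Fin N, |y i - (x i + ((j : ℕ) + 1 / 2) * (ℓ / N))| ≤ ℓ / (2 * N) := by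
    intro i
    have hN0 : (0 : ℝ) < N := by exact_mod_cast hpos i
    obtain ⟨hl, hu⟩ := hy i
    obtain ⟨j, hj⟩ := exists_fin_abs_sub_midpoint_le (hpos i) (t := (y i - x i) / (ℓ / N))
      (div_nonneg (by linarith) (by positivity))
      (by rw [div_le_iff₀ (by positivity)]; field_simp; linarith)
    refine ⟨j, ?_⟩
    have e : y i - (x i + ((j : ℕ) + 1 / 2) * (ℓ / N))
        = ((y i - x i) / (ℓ / N) - ((j : ℕ) + 1 / 2)) * (ℓ / N) := by
      field_simp
      ring
    rw [e, abs_mul, abs_of_pos (a := ℓ / N) (by positivity)]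
    calc _ ≤ 1 / 2 * (ℓ / N) := by gcongr
      _ = _ := by field_simp
  choose f hf using key
  refine ⟨f, ?_⟩
  rw [EuclideanSpace.dist_eq, Real.sqrt_le_left hℓ.le]
  have hbound : ∀ i ∈ Finset.univ,
      dist (y i) (subcubeCenter x ℓ N f i) ^ 2 ≤ (ℓ / (2 * N)) ^ 2 := fun i _ =>
    pow_le_pow_left₀ dist_nonneg (by rw [Real.dist_eq]; exact hf i) 2
  refine (Finset.sum_le_card_nsmul _ _ _ hbound).trans ?_
  rw [Finset.card_univ, Fintype.card_fin, nsmul_eq_mul]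
  have hsq : (d : ℝ) ≤ (2 * N) ^ 2 := Real.sqrt_le_left (by positivity) |>.1 (by linarith)
  rw [div_pow, ← mul_div_assoc]
  exact div_le_of_le_mul₀ (by positivity) (by positivity) (by nlinarith [sq_nonneg ℓ])

/-- At most `⌈√d/2⌉^d · φ` edges of length at least `ℓ` of a
`φ`-low-density curve intersect an axis-parallel cube of side length `ℓ`. -/
theorem lowDensity_cube_intersections {d k : ℕ} (φ : ℝ) (p : Fin (k + 1) → Pt d)
    (hp : IsLowDensity φ p) (x : Pt d) (ℓ : ℝ) (hℓ : 0 < ℓ) :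
    (({i : Fin k | ℓ ≤ dist (p i.castSucc) (p i.succ) ∧
        (segment ℝ (p i.castSucc) (p i.succ) ∩ cube x ℓ).Nonempty}).ncard : ℝ)
      ≤ (⌈Real.sqrt d / 2⌉₊ : ℝ) ^ d * φ := by
  set N := ⌈Real.sqrt d / 2⌉₊ with hN
  let S : (Fin d → Fin N) → Set (Fin k) := fun f =>
    {i | ℓ ≤ dist (p i.castSucc) (p i.succ) ∧
      (segment ℝ (p i.castSucc) (p i.succ) ∩ closedBall (subcubeCenter x ℓ N f) ℓ).Nonempty}
  have hsub : {i : Fin k | ℓ ≤ dist (p i.castSucc) (p i.succ) ∧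
      (segment ℝ (p i.castSucc) (p i.succ) ∩ cube x ℓ).Nonempty} ⊆ ⋃ f, S f := by
    rintro i ⟨hi, y, hys, hyc⟩
    obtain ⟨f, hf⟩ := exists_dist_subcubeCenter_le x hℓ (Nat.le_ceil _) hyc
    exact mem_iUnion.2 ⟨f, hi, y, hys, hf⟩
  calc _ ≤ ((⋃ f, S f).ncard : ℝ) := by exact_mod_cast ncard_le_ncard hsub (toFinite _)
    _ ≤ ((∑ f, (S f).ncard : ℕ) : ℝ) := by
      exact_mod_cast ncard_iUnion_le_of_fintype S
    _ ≤ ∑ _f : Fin d → Fin N, φ := by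
      push_cast
      exact Finset.sum_le_sum fun f _ => hp _ ℓ hℓ
    _ = (N : ℝ) ^ d * φ := by simp
end
end

section
/- For every d ≥ 2 and every φ ≥ 1 there exists a constant C > 0 with the following property. Let P and Q be φ-low-density polygonal curves in ℝ^d with a total of n ≥ 1 vertices, let δ > 0 and 0 < ε < 1, and let P' and Q' be εδ-simplifications of P and Q respectively. Then the number of pairs (v, e), where v is a vertex of P' and e is an edge of Q' with infimum distance from v to e at most δ, plus the number of pairs (w, f), where w is a vertex of Q' and f is an edge of P' with infimum distance from w to f at most δ, is at most C·n^{2(d−1)/d}/ε². -/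
/-!
Write `P`, `Q` for the curves and `P'`, `Q'` for their simplifications. Partition space into the
cells of a grid of side `δ`, and group the pairs (vertex of `P'`, edge of `Q'`) by the cell `z`
containing the vertex. Let `N z` be the number of vertices of `P` and `Q` in a ball of radius
`O(δ)` around `z`; a cell that matters has `N z ≥ 1`, and `∑ N z = O(n)`, because each vertex is
counted for `O(1)` cells (`sum_card_near_corner_le`).

The number of vertices of `P'` in `z` and the number of edges of `Q'` at distance at most `δ` from
these vertices are both `O(N z ^ (1 - 1/d) / ε)` (`card_simplification_edges_le`). So the number of
pairs is `O(∑ N z ^ (2 (1 - 1/d)) / ε²)`, and since the exponent `2 (1 - 1/d)` is at least `1` for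
`d ≥ 2`, the sum is at most `(∑ N z) ^ (2 (1 - 1/d))`.

For the bound in one cell, consider the edges of `Q'` that meet a ball of radius `O(δ)`. If the last
original edge replaced by such an edge has length at least `δ`, there are `O(1)` choices for it by low
density. Otherwise the replaced subcurve lies in a slightly larger ball and has length at least
`εδ`; these subcurves are disjoint and consist of at most `N z` edges, and `N` short low-density
edges in a ball of radius `R` have total length `O(R N ^ (1 - 1/d))` (`sum_length_le`), because only
`O((R/r)^d)` of them have length at least `r`.
-/

open MeasureTheory Metric Set
open scoped ENNReal NNReal

noncomputable section

/-! ### Counting in grids -/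

/-- A cube of side `2R` contains at most `(2R/g + 1)^d` corners of a grid of side `g`. -/
lemma grid_card_le {d : ℕ} (Z : Finset (Fin d → ℤ)) (x : Pt d) {g R : ℝ} (hg : 0 < g)
    (hR : 0 ≤ R) (h : ∀ z ∈ Z, ∀ i, |g * z i - x i| ≤ R) :
    (Z.card : ℝ) ≤ (2 * R / g + 1) ^ d := by
  have hsub : Z ⊆ Fintype.piFinset
      (fun i => Finset.Icc ⌈(x i - R) / g⌉ ⌊(x i + R) / g⌋) := by
    intro z hz
    rw [Fintype.mem_piFinset]
    intro i
    have := abs_le.1 (h z hz i)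
    rw [Finset.mem_Icc, Int.ceil_le, Int.le_floor, div_le_iff₀ hg, le_div_iff₀ hg]
    constructor <;> linarith [this.1, this.2]
  have h1 : (Z.card : ℝ) ≤
      ∏ i : Fin d, ((Finset.Icc ⌈(x i - R) / g⌉ ⌊(x i + R) / g⌋).card : ℝ) := by
    have := Finset.card_le_card hsub
    rw [Fintype.card_piFinset] at this
    exact_mod_cast this
  refine h1.trans ?_
  calc _ ≤ ∏ _i : Fin d, (2 * R / g + 1) := by
        refine Finset.prod_le_prod (fun _ _ => by positivity) fun i _ => ?_
        rw [Int.card_Icc]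
        have hnn : (0 : ℝ) ≤ 2 * R / g + 1 := by positivity
        rw [← Int.cast_natCast, Int.toNat_eq_max, Int.cast_max]
        refine max_le ?_ (by simpa using hnn)
        push_cast
        have a1 := Int.floor_le ((x i + R) / g)
        have a2 := Int.le_ceil ((x i - R) / g)
        have : (x i + R) / g - (x i - R) / g = 2 * R / g := by ring
        linarith
    _ = _ := by simp

/-- The vertex of the cell of the grid of side `g` indexed by `z`. -/
def corner {d : ℕ} (g : ℝ) (z : Fin d → ℤ) : Pt d := WithLp.toLp 2 fun i => g * z i

/-- The index of the half-open cell of the grid of side `g` containing `y`. -/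
def cell {d : ℕ} (g : ℝ) (y : Pt d) : Fin d → ℤ := fun i => ⌊y i / g⌋

lemma abs_corner_cell {d : ℕ} {g : ℝ} (hg : 0 < g) (y : Pt d) (i : Fin d) :
    |g * (cell g y i : ℝ) - y i| ≤ g := by
  have a1 := Int.floor_le (y i / g)
  have a2 := (Int.lt_floor_add_one (y i / g)).le
  rw [le_div_iff₀ hg] at a1
  rw [div_le_iff₀ hg] at a2
  unfold cell
  rw [abs_le]
  constructor <;> nlinarith

lemma dist_corner_cell {d : ℕ} {g : ℝ} (hg : 0 < g) (y : Pt d) :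
    dist (corner g (cell g y)) y ≤ d * g := by
  rw [EuclideanSpace.dist_eq]
  apply Real.sqrt_le_iff.2
  refine ⟨by positivity, ?_⟩
  calc _ ≤ ∑ _i : Fin d, g ^ 2 := by
        refine Finset.sum_le_sum fun i _ => ?_
        rw [Real.dist_eq]
        exact pow_le_pow_left₀ (abs_nonneg _) (abs_corner_cell hg y i) 2
    _ = d * g ^ 2 := by simp
    _ ≤ (d * g) ^ 2 := by
        rw [mul_pow]
        refine mul_le_mul_of_nonneg_right ?_ (by positivity)
        exact_mod_cast Nat.le_self_pow two_ne_zero d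

lemma abs_coord_sub_le {d : ℕ} (x y : Pt d) (i : Fin d) : |x i - y i| ≤ dist x y := by
  rw [dist_eq_norm]
  exact PiLp.norm_apply_le (x - y) i

/-! ### Lengths of low-density curves -/

/-- Low density bounds the number of edges of length at least `r` meeting a larger ball: cut the
ball into cells of diameter at most `r`. -/
lemma card_long_edges_le {d k : ℕ} (hd : 1 ≤ d) {φ : ℝ} {p : Fin (k + 1) → Pt d}
    (hp : IsLowDensity φ p) (hφ : 0 ≤ φ) (S : Finset (Fin k)) (x : Pt d) {r R : ℝ} (hr : 0 < r)
    (hrR : r ≤ R) (hlen : ∀ i ∈ S, r ≤ dist (p i.castSucc) (p i.succ))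
    (hmeet : ∀ i ∈ S, ∃ y ∈ segment ℝ (p i.castSucc) (p i.succ), dist y x ≤ R) :
    (S.card : ℝ) ≤ φ * ((4 * d + 1) * (R / r)) ^ d := by
  classical
  have hd0 : (0 : ℝ) < d := by exact_mod_cast hd
  have hd1 : (1 : ℝ) ≤ d := by exact_mod_cast hd
  choose! y hy hyR using hmeet
  set g : ℝ := r / d with hgdef
  have hg : 0 < g := by positivity
  have hdg : d * g = r := by rw [hgdef]; field_simp
  have hgr : g ≤ r := by rw [← hdg]; nlinarith
  let f : Fin k → (Fin d → ℤ) := fun i => cell g (y i)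
  have hfib : ∀ z ∈ S.image f, (((S.filter fun i => f i = z).card : ℕ) : ℝ) ≤ φ := by
    intro z _
    refine le_trans ?_ (hp (corner g z) r hr)
    rw [← Set.ncard_coe_finset]
    refine Nat.cast_le.2 (Set.ncard_le_ncard (fun i hi => ?_) (Set.toFinite _))
    simp only [Finset.coe_filter, Set.mem_ofPred_eq] at hi
    refine ⟨hlen i hi.1, y i, hy i hi.1, ?_⟩
    rw [mem_closedBall, dist_comm, ← hi.2, ← hdg]
    exact dist_corner_cell hg _
  have hsum : (S.card : ℝ) ≤ φ * (S.image f).card := by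
    have := Finset.card_eq_sum_card_image f S
    rw [this]
    push_cast
    calc _ ≤ ∑ _z ∈ S.image f, φ := Finset.sum_le_sum hfib
      _ = _ := by rw [Finset.sum_const, nsmul_eq_mul, mul_comm]
  refine hsum.trans (mul_le_mul_of_nonneg_left ?_ hφ)
  refine (grid_card_le (S.image f) x hg (R := 2 * R) (by linarith) ?_).trans ?_
  · intro z hz i
    obtain ⟨j, hj, rfl⟩ := Finset.mem_image.1 hz
    have a1 := abs_corner_cell hg (y j) i
    have a2 := (abs_coord_sub_le (y j) x i).trans (hyR j hj)
    have a3 := abs_add_le (g * (cell g (y j) i : ℝ) - y j i) (y j i - x i)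
    rw [sub_add_sub_cancel] at a3
    linarith
  · have hR : 0 < R := hr.trans_le hrR
    refine pow_le_pow_left₀ (by positivity) ?_ d
    have : 1 ≤ R / r := (one_le_div hr).2 hrR
    have e : 2 * (2 * R) / g = 4 * d * (R / r) := by
      rw [hgdef]; field_simp; ring
    rw [e]
    linarith

/-- The inductive step of `∑_{1 ≤ i ≤ N} i^(a-1) ≤ 2 N^a`; it is
Bernoulli's inequality for `(1 - 1/(N+1))^a`. -/
lemma rpow_step {a : ℝ} (ha : 1 / 2 ≤ a) (ha1 : a ≤ 1) (N : ℕ) :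
    2 * (N : ℝ) ^ a + ((N + 1 : ℕ) : ℝ) ^ (a - 1) ≤ 2 * ((N + 1 : ℕ) : ℝ) ^ a := by
  have hM : (0 : ℝ) < ((N + 1 : ℕ) : ℝ) := by positivity
  set M : ℝ := ((N + 1 : ℕ) : ℝ) with hMdef
  have hM1 : (1 : ℝ) ≤ M := by rw [hMdef]; push_cast; linarith [Nat.cast_nonneg (α := ℝ) N]
  have hN : (N : ℝ) = M * (1 + -(1 / M)) := by
    have : M = N + 1 := by rw [hMdef]; push_cast; ring
    field_simp; linarith
  have hle : 1 / M ≤ 1 := by rw [div_le_one hM]; exact hM1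
  have hb := rpow_one_add_le_one_add_mul_self (s := -(1 / M)) (by linarith) (by linarith : 0 ≤ a) ha1
  have hNa : (N : ℝ) ^ a ≤ M ^ a * (1 + a * -(1 / M)) := by
    rw [hN, Real.mul_rpow hM.le (by linarith)]
    exact mul_le_mul_of_nonneg_left hb (by positivity)
  have hMa : M ^ (a - 1) = M ^ a * (1 / M) := by
    rw [Real.rpow_sub_one hM.ne']; ring
  have : 0 ≤ M ^ a * (1 / M) := by positivity
  rw [hMa]
  nlinarith

/-- `N` low-density edges meeting a ball of radius `R`, none longer than `R`, have total length
`O(R N^(1-1/d))`: the shortest of them has length `O(R N^(-1/d))`, and one inducts on `N` by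
removing it. -/
lemma sum_length_le {d k : ℕ} (hd : 2 ≤ d) {φ : ℝ} (hφ : 1 ≤ φ) {p : Fin (k + 1) → Pt d}
    (hp : IsLowDensity φ p) (x : Pt d) {R : ℝ} (hR : 0 < R) (N : ℕ) :
    ∀ S : Finset (Fin k), S.card = N →
    (∀ i ∈ S, dist (p i.castSucc) (p i.succ) ≤ R) →
    (∀ i ∈ S, ∃ y ∈ segment ℝ (p i.castSucc) (p i.succ), dist y x ≤ R) →
    ∑ i ∈ S, dist (p i.castSucc) (p i.succ)
      ≤ (4 * d + 1) * φ * R * (2 * (N : ℝ) ^ (1 - 1 / (d : ℝ))) := by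
  classical
  have hd2 : (2 : ℝ) ≤ d := by exact_mod_cast hd
  have hinv : 1 / (d : ℝ) ≤ 1 / 2 := one_div_le_one_div_of_le (by norm_num) hd2
  have hinv0 : 0 < 1 / (d : ℝ) := by positivity
  induction N with
  | zero =>
    intro S hS _ _
    rw [Finset.card_eq_zero] at hS
    subst hS
    simp only [Finset.sum_empty]
    positivity
  | succ N ih =>
    intro S hS hlen hmeet
    have hne : S.Nonempty := Finset.card_pos.1 (by omega)
    obtain ⟨i₀, hi₀, hmin⟩ :=
      S.exists_min_image (fun i => dist (p i.castSucc) (p i.succ)) hne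
    have h1 := ih (S.erase i₀) (by rw [Finset.card_erase_of_mem hi₀, hS]; rfl)
      (fun i hi => hlen i (Finset.mem_of_mem_erase hi))
      (fun i hi => hmeet i (Finset.mem_of_mem_erase hi))
    rw [← Finset.add_sum_erase S _ hi₀]
    set l := dist (p i₀.castSucc) (p i₀.succ) with hl
    set M : ℝ := ((N + 1 : ℕ) : ℝ) with hMdef
    have hM : 0 < M := by positivity
    have hl1 : l ≤ (4 * d + 1) * φ * R * M ^ ((1 - 1 / (d : ℝ)) - 1) := by
      rcases (dist_nonneg : 0 ≤ l).eq_or_lt with h0 | h0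
      · rw [show l = 0 from h0.symm]; positivity
      have hc := card_long_edges_le (by omega) hp (by linarith) S x h0 (hlen i₀ hi₀) hmin hmeet
      rw [hS, ← hMdef] at hc
      have hc2 : M ≤ ((4 * d + 1) * φ * R / l) ^ d := by
        refine hc.trans ?_
        -- Since `1 ≤ φ ≤ φ ^ d`, the factor `φ` can be moved inside the `d`-th power.
        calc φ * ((4 * d + 1) * (R / l)) ^ d ≤ φ ^ d * ((4 * d + 1) * (R / l)) ^ d := by
              refine mul_le_mul_of_nonneg_right ?_ (by positivity)
              exact le_self_pow₀ hφ (by omega)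
          _ = _ := by rw [← mul_pow]; congr 1; ring
      have hc3 : M ^ (1 / (d : ℝ)) ≤ (4 * d + 1) * φ * R / l := by
        have h := Real.rpow_le_rpow hM.le hc2 hinv0.le
        rwa [one_div, Real.pow_rpow_inv_natCast (by positivity) (by omega), ← one_div] at h
      have e : (1 - 1 / (d : ℝ)) - 1 = -(1 / (d : ℝ)) := by ring
      rw [e, Real.rpow_neg hM.le, ← div_eq_mul_inv, le_div_iff₀ (by positivity)]
      rw [le_div_iff₀ h0] at hc3
      linarith
    have hs := rpow_step (a := 1 - 1 / (d : ℝ)) (by linarith) (by linarith) N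
    rw [← hMdef] at hs
    have := mul_le_mul_of_nonneg_left hs (show 0 ≤ (4 * (d : ℝ) + 1) * φ * R by positivity)
    linarith

lemma dist_le_sum_edges {d k : ℕ} (p : Fin (k + 1) → Pt d) (a b : Fin (k + 1)) (hab : a ≤ b) :
    dist (p a) (p b) ≤ ∑ i : Fin k with a ≤ i.castSucc ∧ i.castSucc < b,
      dist (p i.castSucc) (p i.succ) := by
  classical
  induction b using Fin.induction with
  | zero =>
    have : a = 0 := Fin.le_zero_iff.1 hab
    subst this
    rw [dist_self]
    exact Finset.sum_nonneg fun _ _ => dist_nonneg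
  | succ b ih =>
    rcases hab.eq_or_lt with h | h
    · rw [h, dist_self]
      exact Finset.sum_nonneg fun _ _ => dist_nonneg
    have hb : a ≤ b.castSucc := Fin.le_castSucc_iff.2 h
    have hset : (Finset.univ.filter fun i : Fin k => a ≤ i.castSucc ∧ i.castSucc < b.succ)
        = insert b (Finset.univ.filter fun i : Fin k => a ≤ i.castSucc ∧ i.castSucc < b.castSucc) := by
      ext i
      simp only [Finset.mem_filter, Finset.mem_univ, true_and, Finset.mem_insert,
        Fin.le_def, Fin.lt_def, Fin.ext_iff, Fin.val_castSucc, Fin.val_succ] at hb ⊢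
      omega
    rw [hset, Finset.sum_insert (by simp)]
    have := dist_triangle (p a) (p b.castSucc) (p b.succ)
    linarith [ih hb]

lemma dist_left_le_of_mem_segment {d : ℕ} {a b y : Pt d} (hy : y ∈ segment ℝ a b) :
    dist y a ≤ dist a b := by
  have := (convex_closedBall a (dist a b)).segment_subset
    (mem_closedBall_self dist_nonneg) (by rw [mem_closedBall, dist_comm]) hy
  exact this

/-- Moving one endpoint of a segment moves each of its points at most as far. -/
lemma exists_mem_segment_near {d : ℕ} {a a' b y : Pt d} (hy : y ∈ segment ℝ a b) :
    ∃ y' ∈ segment ℝ a' b, dist y' y ≤ dist a' a := by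
  obtain ⟨s, t, hs, ht, hst, rfl⟩ := hy
  refine ⟨s • a' + t • b, ⟨s, t, hs, ht, hst, rfl⟩, ?_⟩
  rw [dist_add_right, dist_smul₀, Real.norm_of_nonneg hs]
  have : s ≤ 1 := by linarith
  nlinarith [dist_nonneg (x := a') (y := a)]

/-! ### Edges of a simplification near a ball -/

/-- `O(N^(1-1/d)/ε)` edges of the simplification meet a ball of radius `ρδ`, if at most `N`
vertices of the original curve lie in the ball of radius `(ρ+4)δ`. Each edge of the simplification
is charged to the last original edge it replaces if this has length at least `δ`; otherwise the
whole replaced subcurve lies in the larger ball, and it has length at least `εδ`. -/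
lemma card_simplification_edges_le {d k m : ℕ} (hd : 2 ≤ d) {φ : ℝ} (hφ : 1 ≤ φ)
    {p : Fin (k + 1) → Pt d} (hp : IsLowDensity φ p) {δ ε : ℝ} (hδ : 0 < δ) (hε : 0 < ε)
    (hε1 : ε < 1) {p' : Fin (m + 1) → Pt d} (hs : IsSimplification (ε * δ) p p')
    (x : Pt d) {ρ : ℝ} (hρ : 0 ≤ ρ) (J : Finset (Fin m))
    (hJ : ∀ j ∈ J, ∃ y ∈ segment ℝ (p' j.castSucc) (p' j.succ), dist y x ≤ ρ * δ)
    {N : ℝ} (hN : 1 ≤ N)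
    (hNc : (({l : Fin (k + 1) | dist (p l) x ≤ (ρ + 4) * δ} : Finset (Fin (k + 1))).card : ℝ) ≤ N) :
    (J.card : ℝ) ≤ (φ * ((4 * d + 1) * (ρ + 1)) ^ d + (4 * d + 1) * φ * (ρ + 3) * 2)
      * (N ^ (1 - 1 / (d : ℝ)) / ε) := by
  classical
  obtain ⟨idx, hmono, -, -, hp', hfar, hnear⟩ := hs
  have hd2 : (2 : ℝ) ≤ d := by exact_mod_cast hd
  have ha0 : 0 ≤ 1 - 1 / (d : ℝ) := by
    have : 1 / (d : ℝ) ≤ 1 / 2 := one_div_le_one_div_of_le (by norm_num) hd2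
    linarith
  have hεδ : 0 < ε * δ := by positivity
  have hεδ' : ε * δ ≤ δ := by nlinarith
  have hstep : ∀ j : Fin m, idx j.castSucc < idx j.succ := fun j => hmono Fin.castSucc_lt_succ
  -- The last original edge replaced by the `j`-th edge of the simplification.
  have hlast : ∀ j : Fin m, ∃ i : Fin k, i.succ = idx j.succ := fun j =>
    Fin.exists_succ_eq.2 (ne_of_gt (lt_of_le_of_lt (Fin.zero_le _) (hstep j)))
  choose f hf using hlast
  have hfge : ∀ j, idx j.castSucc ≤ (f j).castSucc := fun j => by
    rw [Fin.le_castSucc_iff, hf]; exact hstep j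
  have hnear' : ∀ j : Fin m, ∀ l, idx j.castSucc ≤ l → l < idx j.succ →
      dist (p l) (p (idx j.castSucc)) ≤ ε * δ := by
    intro j l h1 h2
    rcases h1.eq_or_lt with h | h
    · rw [← h, dist_self]; exact hεδ.le
    · exact hnear j l h h2
  have hfnear : ∀ j, dist (p (f j).castSucc) (p (idx j.castSucc)) ≤ ε * δ := fun j =>
    hnear' j _ (hfge j) (by rw [← hf]; exact Fin.castSucc_lt_succ)
  set J₁ := J.filter fun j => δ ≤ dist (p (f j).castSucc) (p (f j).succ) with hJ₁
  set J₂ := J.filter fun j => ¬ δ ≤ dist (p (f j).castSucc) (p (f j).succ) with hJ₂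
  have hcard : J₁.card + J₂.card = J.card := Finset.card_filter_add_card_filter_not _
  have hN1 : 1 ≤ N ^ (1 - 1 / (d : ℝ)) / ε := by
    rw [one_le_div hε]
    exact hε1.le.trans (Real.one_le_rpow hN ha0)
  have hc1 : (J₁.card : ℝ) ≤ φ * ((4 * d + 1) * (ρ + 1)) ^ d := by
    have hinj : Function.Injective f := by
      intro a b hab
      have : idx a.succ = idx b.succ := by rw [← hf, ← hf, hab]
      exact Fin.succ_injective _ (hmono.injective this)
    rw [← Finset.card_image_of_injective J₁ hinj]
    have := card_long_edges_le (by omega) hp (by linarith) (J₁.image f) x hδ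
      (R := (ρ + 1) * δ) (by nlinarith) ?_ ?_
    · rwa [mul_div_assoc, div_self hδ.ne', mul_one] at this
    · intro i hi
      obtain ⟨j, hj, rfl⟩ := Finset.mem_image.1 hi
      exact (Finset.mem_filter.1 hj).2
    · intro i hi
      obtain ⟨j, hj, rfl⟩ := Finset.mem_image.1 hi
      obtain ⟨y, hy, hyx⟩ := hJ j (Finset.mem_filter.1 hj).1
      rw [hp', hp', ← hf] at hy
      obtain ⟨y', hy', hyy⟩ := exists_mem_segment_near (a' := p (f j).castSucc) hy
      refine ⟨y', hy', ?_⟩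
      have := dist_triangle y' y x
      have := hfnear j
      linarith
  have hc2 : (J₂.card : ℝ) ≤ (4 * d + 1) * φ * (ρ + 3) * 2 * (N ^ (1 - 1 / (d : ℝ)) / ε) := by
    let E : Fin m → Finset (Fin k) := fun j =>
      Finset.univ.filter fun i => idx j.castSucc ≤ i.castSucc ∧ i.castSucc < idx j.succ
    have hdisj : Set.PairwiseDisjoint (↑J₂ : Set (Fin m)) E := by
      have key : ∀ a b : Fin m, a < b → Disjoint (E a) (E b) := by
        intro a b hab
        rw [Finset.disjoint_left]
        intro i hia hib
        have h1 := (Finset.mem_filter.1 hia).2.2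
        have h2 := (Finset.mem_filter.1 hib).2.1
        have : idx a.succ ≤ idx b.castSucc := hmono.monotone (Fin.succ_le_castSucc_iff.2 hab)
        exact absurd (h1.trans_le (this.trans h2)) (lt_irrefl _)
      intro a _ b _ hab
      rcases lt_or_gt_of_ne hab with h | h
      · exact key a b h
      · exact (key b a h).symm
    set T := J₂.biUnion E with hT
    have hcl : ∀ j ∈ J₂, dist (p (idx j.castSucc)) x ≤ (ρ + 2) * δ := by
      intro j hj
      obtain ⟨hj1, hj2⟩ := Finset.mem_filter.1 hj
      rw [not_le, hf] at hj2
      obtain ⟨y, hy, hyx⟩ := hJ j hj1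
      rw [hp', hp'] at hy
      have h1 := dist_left_le_of_mem_segment hy
      have h2 := dist_triangle (p (idx j.castSucc)) (p (f j).castSucc) (p (idx j.succ))
      have h3 := hfnear j
      rw [dist_comm] at h3
      have h4 := dist_triangle (p (idx j.castSucc)) y x
      rw [dist_comm _ y] at h4
      linarith
    have hTcl : ∀ i ∈ T, dist (p i.castSucc) x ≤ (ρ + 3) * δ ∧
        dist (p i.castSucc) (p i.succ) ≤ 2 * δ := by
      intro i hi
      obtain ⟨j, hj, hij⟩ := Finset.mem_biUnion.1 hi
      obtain ⟨h1, h2⟩ := (Finset.mem_filter.1 hij).2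
      have h3 := hnear' j _ h1 h2
      refine ⟨by linarith [dist_triangle (p i.castSucc) (p (idx j.castSucc)) x, hcl j hj], ?_⟩
      rcases (Fin.castSucc_lt_iff_succ_le.1 h2).eq_or_lt with h | h
      · have : i = f j := Fin.succ_injective _ (h.trans (hf j).symm)
        have h4 := (Finset.mem_filter.1 hj).2
        rw [this]
        linarith
      · have h4 := hnear' j _ (h1.trans Fin.castSucc_lt_succ.le) h
        have := dist_triangle_right (p i.castSucc) (p i.succ) (p (idx j.castSucc))
        linarith
    have hTN : (T.card : ℝ) ≤ N := by
      refine le_trans ?_ hNc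
      rw [← Finset.card_image_of_injective T (Fin.castSucc_injective k)]
      refine Nat.cast_le.2 (Finset.card_le_card fun l hl => ?_)
      obtain ⟨i, hi, rfl⟩ := Finset.mem_image.1 hl
      rw [Finset.mem_filter]
      exact ⟨Finset.mem_univ _, (hTcl i hi).1.trans (by nlinarith)⟩
    have hlow : (J₂.card : ℝ) * (ε * δ) ≤ ∑ i ∈ T, dist (p i.castSucc) (p i.succ) := by
      rw [hT, Finset.sum_biUnion hdisj, ← nsmul_eq_mul]
      refine Finset.card_nsmul_le_sum _ _ _ fun j _ => ?_
      exact (hfar j).trans (dist_le_sum_edges p _ _ (hstep j).le)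
    have hup := sum_length_le hd hφ hp x (R := (ρ + 3) * δ) (by positivity) T.card T rfl
      (fun i hi => (hTcl i hi).2.trans (by nlinarith))
      (fun i hi => ⟨p i.castSucc, left_mem_segment ℝ _ _, (hTcl i hi).1⟩)
    have hpow : (T.card : ℝ) ^ (1 - 1 / (d : ℝ)) ≤ N ^ (1 - 1 / (d : ℝ)) :=
      Real.rpow_le_rpow (by positivity) hTN ha0
    have h5 := hlow.trans (hup.trans (mul_le_mul_of_nonneg_left
      (mul_le_mul_of_nonneg_left hpow zero_le_two) (by positivity)))
    rw [← mul_div_assoc, le_div_iff₀ hε]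
    refine le_of_mul_le_mul_right ?_ hδ
    linarith
  rw [← hcard]
  push_cast
  have h6 : φ * ((4 * d + 1) * (ρ + 1)) ^ d
      ≤ φ * ((4 * d + 1) * (ρ + 1)) ^ d * (N ^ (1 - 1 / (d : ℝ)) / ε) :=
    le_mul_of_one_le_right (by positivity) hN1
  linarith

/-! ### Vertex-edge pairs -/

lemma sum_rpow_le_rpow_sum' {ι : Type*} (s : Finset ι) (N : ι → ℝ) (h : ∀ i ∈ s, 1 ≤ N i) {b S : ℝ}
    (hb : 1 ≤ b) (hS : ∑ i ∈ s, N i ≤ S) : ∑ i ∈ s, N i ^ b ≤ S ^ b := by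
  have h0 : ∀ i ∈ s, 0 ≤ N i := fun i hi => zero_le_one.trans (h i hi)
  have hS0 : 0 ≤ S := (Finset.sum_nonneg h0).trans hS
  have e : ∀ t : ℝ, 0 ≤ t → t ^ b = t * t ^ (b - 1) := fun t ht => by
    rw [← Real.rpow_one_add' ht (by linarith)]; congr 1; ring
  calc ∑ i ∈ s, N i ^ b ≤ ∑ i ∈ s, N i * S ^ (b - 1) := by
        refine Finset.sum_le_sum fun i hi => ?_
        rw [e _ (h0 i hi)]
        refine mul_le_mul_of_nonneg_left (Real.rpow_le_rpow (h0 i hi) ?_ (by linarith)) (h0 i hi)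
        exact (Finset.single_le_sum h0 hi).trans hS
    _ = (∑ i ∈ s, N i) * S ^ (b - 1) := by rw [Finset.sum_mul]
    _ ≤ S * S ^ (b - 1) := mul_le_mul_of_nonneg_right hS (by positivity)
    _ = S ^ b := (e S hS0).symm

/-- Only `(2c+1)^d` corners of a grid of side `δ` lie within distance `cδ` of a given point. -/
lemma sum_card_near_corner_le {d k : ℕ} (p : Fin (k + 1) → Pt d) {δ c : ℝ} (hδ : 0 < δ)
    (hc : 0 ≤ c) (Z : Finset (Fin d → ℤ)) :
    ∑ z ∈ Z, (({l : Fin (k + 1) | dist (p l) (corner δ z) ≤ c * δ} :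
        Finset (Fin (k + 1))).card : ℝ) ≤ ((k : ℝ) + 1) * (2 * c + 1) ^ d := by
  classical
  have : ∑ z ∈ Z, ({l : Fin (k + 1) | dist (p l) (corner δ z) ≤ c * δ} :
        Finset (Fin (k + 1))).card
      = ∑ l : Fin (k + 1), (Z.filter fun z => dist (p l) (corner δ z) ≤ c * δ).card := by
    simp only [Finset.card_filter]
    exact Finset.sum_comm
  rw [← Nat.cast_sum, this]
  push_cast
  calc _ ≤ ∑ _l : Fin (k + 1), (2 * c + 1) ^ d := by
        refine Finset.sum_le_sum fun l _ => ?_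
        have h := grid_card_le (Z.filter fun z => dist (p l) (corner δ z) ≤ c * δ) (p l) hδ
          (R := c * δ) (by positivity) fun z hz i => ?_
        · rwa [← mul_assoc, mul_div_assoc, div_self hδ.ne', mul_one] at h
        · have h1 := abs_coord_sub_le (corner δ z) (p l) i
          rw [dist_comm] at h1
          exact h1.trans (Finset.mem_filter.1 hz).2
    _ = _ := by simp

/-- The constant in the bound on the number of edges of a simplification that meet a ball. -/
def edgeConst (d : ℕ) (φ : ℝ) : ℝ :=
  φ * ((4 * d + 1) * ((d + 2 : ℝ) + 1)) ^ d + (4 * d + 1) * φ * ((d + 2 : ℝ) + 3) * 2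

/-- The vertex-edge pairs in one direction. They are grouped by the cell of the grid of side `δ`
that contains the vertex. -/
lemma card_pairs_le {d k₁ k₂ m₁ m₂ : ℕ} (hd : 2 ≤ d) {φ : ℝ} (hφ : 1 ≤ φ)
    {p : Fin (k₁ + 1) → Pt d} {q : Fin (k₂ + 1) → Pt d} (hp : IsLowDensity φ p)
    (hq : IsLowDensity φ q) {δ ε : ℝ} (hδ : 0 < δ) (hε : 0 < ε) (hε1 : ε < 1)
    {p' : Fin (m₁ + 1) → Pt d} {q' : Fin (m₂ + 1) → Pt d}
    (hsp : IsSimplification (ε * δ) p p') (hsq : IsSimplification (ε * δ) q q') :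
    (({ve : Fin (m₁ + 1) × Fin m₂ | Metric.infDist (p' ve.1)
        (segment ℝ (q' ve.2.castSucc) (q' ve.2.succ)) ≤ δ}).ncard : ℝ)
      ≤ (1 + edgeConst d φ) ^ 2 / ε ^ 2 *
        (((k₁ : ℝ) + 1 + (k₂ + 1)) * (2 * ((d + 2 : ℝ) + 4) + 1) ^ d)
          ^ (2 * (1 - 1 / (d : ℝ))) := by
  classical
  have hd2 : (2 : ℝ) ≤ d := by exact_mod_cast hd
  have hhalf : 1 / (d : ℝ) ≤ 1 / 2 := one_div_le_one_div_of_le (by norm_num) hd2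
  set K := edgeConst d φ with hK
  have hK0 : 0 ≤ K := by rw [hK, edgeConst]; positivity
  set ρ : ℝ := d + 2 with hρ
  have hρ0 : 0 ≤ ρ := by positivity
  let Z : Finset (Fin d → ℤ) := Finset.univ.image fun v => cell δ (p' v)
  let A : (Fin d → ℤ) → Finset (Fin (m₁ + 1)) := fun z =>
    Finset.univ.filter fun v => cell δ (p' v) = z
  let I : (Fin d → ℤ) → Finset (Fin m₁) := fun z =>
    Finset.univ.filter fun e => ∃ y ∈ segment ℝ (p' e.castSucc) (p' e.succ),
      dist y (corner δ z) ≤ ρ * δ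
  let B : (Fin d → ℤ) → Finset (Fin m₂) := fun z =>
    Finset.univ.filter fun e => ∃ y ∈ segment ℝ (q' e.castSucc) (q' e.succ),
      dist y (corner δ z) ≤ ρ * δ
  let N₁ : (Fin d → ℤ) → ℝ := fun z =>
    (({l : Fin (k₁ + 1) | dist (p l) (corner δ z) ≤ (ρ + 4) * δ} : Finset (Fin (k₁ + 1))).card : ℝ)
  let N₂ : (Fin d → ℤ) → ℝ := fun z =>
    (({l : Fin (k₂ + 1) | dist (q l) (corner δ z) ≤ (ρ + 4) * δ} : Finset (Fin (k₂ + 1))).card : ℝ)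
  have hN₁0 : ∀ z, 0 ≤ N₁ z := fun z => Nat.cast_nonneg _
  have hN₂0 : ∀ z, 0 ≤ N₂ z := fun z => Nat.cast_nonneg _
  have hclose : ∀ v : Fin (m₁ + 1), dist (p' v) (corner δ (cell δ (p' v))) ≤ d * δ := fun v => by
    rw [dist_comm]; exact dist_corner_cell hδ _
  have hN : ∀ z ∈ Z, 1 ≤ N₁ z + N₂ z := by
    intro z hz
    obtain ⟨v, -, rfl⟩ := Finset.mem_image.1 hz
    have : 1 ≤ N₁ (cell δ (p' v)) := by
      obtain ⟨idx, -, -, -, hp', -, -⟩ := hsp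
      refine Nat.one_le_cast.2 (Finset.card_pos.2 ⟨idx v, ?_⟩)
      rw [Finset.mem_filter]
      refine ⟨Finset.mem_univ _, ?_⟩
      rw [← hp']
      refine (hclose v).trans ?_
      rw [hρ]; nlinarith
    linarith [hN₂0 (cell δ (p' v))]
  have hV : (({ve : Fin (m₁ + 1) × Fin m₂ | Metric.infDist (p' ve.1)
        (segment ℝ (q' ve.2.castSucc) (q' ve.2.succ)) ≤ δ}).ncard : ℝ)
      ≤ ∑ z ∈ Z, ((A z).card : ℝ) * (B z).card := by
    have hsub : {ve : Fin (m₁ + 1) × Fin m₂ | Metric.infDist (p' ve.1)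
        (segment ℝ (q' ve.2.castSucc) (q' ve.2.succ)) ≤ δ} ⊆
        (↑(Z.biUnion fun z => A z ×ˢ B z) : Set (Fin (m₁ + 1) × Fin m₂)) := by
      rintro ⟨v, e⟩ hve
      simp only [Set.mem_ofPred_eq] at hve
      rw [Finset.mem_coe, Finset.mem_biUnion]
      refine ⟨cell δ (p' v), Finset.mem_image_of_mem _ (Finset.mem_univ v), ?_⟩
      rw [Finset.mem_product]
      refine ⟨Finset.mem_filter.2 ⟨Finset.mem_univ _, rfl⟩,
        Finset.mem_filter.2 ⟨Finset.mem_univ _, ?_⟩⟩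
      -- The radius is doubled so that a point of the edge is obtained without compactness.
      have hlt : Metric.infDist (p' v) (segment ℝ (q' e.castSucc) (q' e.succ)) < 2 * δ := by
        linarith
      obtain ⟨y, hy, hyd⟩ := (Metric.infDist_lt_iff ⟨_, left_mem_segment ℝ _ _⟩).1 hlt
      refine ⟨y, hy, ?_⟩
      have := dist_triangle y (p' v) (corner δ (cell δ (p' v)))
      rw [dist_comm y (p' v)] at this
      have := hclose v
      rw [hρ]
      linarith
    have h1 := (Set.ncard_le_ncard hsub (Finset.finite_toSet _))
    rw [Set.ncard_coe_finset] at h1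
    have h2 := h1.trans Finset.card_biUnion_le
    simp only [Finset.card_product] at h2
    exact_mod_cast h2
  -- Every vertex but the first is the right endpoint of an edge of `P'` that meets the ball.
  have hA : ∀ z, ((A z).card : ℝ) ≤ 1 + (I z).card := by
    intro z
    have hsub : A z ⊆ insert 0 ((I z).image Fin.succ) := by
      intro v hv
      have hv' := (Finset.mem_filter.1 hv).2
      rcases Fin.eq_zero_or_eq_succ v with rfl | ⟨e, rfl⟩
      · exact Finset.mem_insert_self _ _
      · refine Finset.mem_insert_of_mem (Finset.mem_image_of_mem _ ?_)
        refine Finset.mem_filter.2 ⟨Finset.mem_univ _, _, right_mem_segment ℝ _ _, ?_⟩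
        rw [← hv']
        refine (hclose _).trans ?_
        rw [hρ]; nlinarith
    have h1 := (Finset.card_le_card hsub).trans (Finset.card_insert_le _ _)
    have h2 := h1.trans (Nat.add_le_add_right Finset.card_image_le 1)
    have : ((A z).card : ℝ) ≤ (I z).card + 1 := by exact_mod_cast h2
    linarith
  have hterm : ∀ z ∈ Z, ((A z).card : ℝ) * (B z).card
      ≤ (1 + K) ^ 2 / ε ^ 2 * (N₁ z + N₂ z) ^ (2 * (1 - 1 / (d : ℝ))) := by
    intro z hz
    set X := (N₁ z + N₂ z) ^ (1 - 1 / (d : ℝ)) with hX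
    have hX1 : 1 ≤ X / ε := by
      rw [one_le_div hε]
      exact hε1.le.trans (Real.one_le_rpow (hN z hz) (by linarith))
    have hI : ((I z).card : ℝ) ≤ K * (X / ε) :=
      card_simplification_edges_le hd hφ hp hδ hε hε1 hsp (corner δ z) hρ0 (I z)
        (fun e he => (Finset.mem_filter.1 he).2) (hN z hz) (le_add_of_nonneg_right (hN₂0 z))
    have hB : ((B z).card : ℝ) ≤ K * (X / ε) :=
      card_simplification_edges_le hd hφ hq hδ hε hε1 hsq (corner δ z) hρ0 (B z)
        (fun e he => (Finset.mem_filter.1 he).2) (hN z hz) (le_add_of_nonneg_left (hN₁0 z))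
    have e : (N₁ z + N₂ z) ^ (2 * (1 - 1 / (d : ℝ))) = X ^ 2 := by
      rw [mul_comm, Real.rpow_mul (by linarith [hN z hz]), Real.rpow_two]
    rw [e]
    calc _ ≤ ((1 + K) * (X / ε)) * ((1 + K) * (X / ε)) := by
          refine mul_le_mul ?_ ?_ (Nat.cast_nonneg _) (by positivity)
          · linarith [hA z]
          · linarith
      _ = _ := by ring
  have hsumN : ∑ z ∈ Z, (N₁ z + N₂ z)
      ≤ ((k₁ : ℝ) + 1 + (k₂ + 1)) * (2 * (ρ + 4) + 1) ^ d := by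
    rw [Finset.sum_add_distrib, add_mul]
    exact add_le_add (sum_card_near_corner_le p hδ (by positivity) Z)
      (sum_card_near_corner_le q hδ (by positivity) Z)
  refine hV.trans ((Finset.sum_le_sum hterm).trans ?_)
  rw [← Finset.mul_sum]
  exact mul_le_mul_of_nonneg_left
    (sum_rpow_le_rpow_sum' Z _ hN (by linarith) hsumN) (by positivity)

/-- For `εδ`-simplifications of two `φ`-low-density curves with `n`
vertices in total, the number of vertex-edge pairs at distance at most `δ` (in both
directions) is at most `C · n^{2(d-1)/d} / ε²`. -/
theorem lowDensity_resemblance (d : ℕ) (hd : 2 ≤ d) (φ : ℝ) (hφ : 1 ≤ φ) :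
    ∃ C : ℝ, 0 < C ∧
      ∀ (k₁ k₂ m₁ m₂ : ℕ) (p : Fin (k₁ + 1) → Pt d) (q : Fin (k₂ + 1) → Pt d),
        IsLowDensity φ p → IsLowDensity φ q →
        ∀ n : ℕ, n = (k₁ + 1) + (k₂ + 1) → 1 ≤ n →
        ∀ (δ ε : ℝ), 0 < δ → 0 < ε → ε < 1 →
        ∀ (p' : Fin (m₁ + 1) → Pt d) (q' : Fin (m₂ + 1) → Pt d),
          IsSimplification (ε * δ) p p' → IsSimplification (ε * δ) q q' →
          (({ve : Fin (m₁ + 1) × Fin m₂ | Metric.infDist (p' ve.1)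
              (segment ℝ (q' ve.2.castSucc) (q' ve.2.succ)) ≤ δ}).ncard : ℝ)
            + (({ve : Fin (m₂ + 1) × Fin m₁ | Metric.infDist (q' ve.1)
              (segment ℝ (p' ve.2.castSucc) (p' ve.2.succ)) ≤ δ}).ncard : ℝ)
          ≤ C * (n : ℝ) ^ ((2 * ((d : ℝ) - 1)) / (d : ℝ)) / ε ^ 2 := by
  have hd0 : (0 : ℝ) < d := by exact_mod_cast (by omega : 0 < d)
  set K := edgeConst d φ with hK
  have hK0 : 0 ≤ K := by rw [hK, edgeConst]; positivity
  set M : ℝ := (2 * ((d + 2 : ℝ) + 4) + 1) ^ d with hM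
  have hM0 : 0 < M := by positivity
  have hexp : 2 * (1 - 1 / (d : ℝ)) = (2 * ((d : ℝ) - 1)) / (d : ℝ) := by
    field_simp
  set b : ℝ := (2 * ((d : ℝ) - 1)) / (d : ℝ) with hb
  refine ⟨2 * ((1 + K) ^ 2 * M ^ b), by positivity, ?_⟩
  intro k₁ k₂ m₁ m₂ p q hp hq n hn _ δ ε hδ hε hε1 p' q' hsp hsq
  have h1 := card_pairs_le hd hφ hp hq hδ hε hε1 hsp hsq
  have h2 := card_pairs_le hd hφ hq hp hδ hε hε1 hsq hsp
  have e1 : (k₁ : ℝ) + 1 + (k₂ + 1) = n := by rw [hn]; push_cast; ring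
  have e2 : (k₂ : ℝ) + 1 + (k₁ + 1) = n := by rw [hn]; push_cast; ring
  rw [e1, hexp, Real.mul_rpow (by positivity) hM0.le] at h1
  rw [e2, hexp, Real.mul_rpow (by positivity) hM0.le] at h2
  calc _ ≤ _ := add_le_add h1 h2
    _ = _ := by ring
end
end

section
/- Let κ ≥ 1, let γ : [0,1] → ℝ^d be a κ-bounded curve, and let μ > 0. If 0 ≤ s ≤ s' ≤ t' ≤ t ≤ 1 are parameters with dist(γ(s'), γ(t')) ≥ μ, then dist(γ(s), γ(t)) > μ/(4κ). -/
/-!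
Write `D` for the distance between `γ s` and `γ t`. By `κ`-boundedness each of `γ s'` and `γ t'`
is within `(κ / 2) * D` of an endpoint, and the endpoints are at distance `D`, so the triangle
inequality gives `μ ≤ (κ + 1) * D ≤ 2 * κ * D`. Since `μ` is positive, `μ / (4 * κ) < D`.
-/

open MeasureTheory Metric Set
open scoped ENNReal NNReal

noncomputable section

/-- If a `κ`-bounded curve has two parameters `s' ≤ t'` inside `[s, t]`
whose images are at distance at least `μ`, then `dist (γ s) (γ t) > μ/(4κ)`. -/
theorem kappaBounded_nested_dist {d : ℕ} (κ μ : ℝ) (hκ : 1 ≤ κ) (hμ : 0 < μ)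
    (γ : ℝ → Pt d) (hγ : IsKBounded κ γ)
    (s s' t' t : ℝ) (h0 : 0 ≤ s) (h1 : s ≤ s') (h2 : s' ≤ t') (h3 : t' ≤ t) (h4 : t ≤ 1)
    (hdist : μ ≤ dist (γ s') (γ t')) :
    μ / (4 * κ) < dist (γ s) (γ t) := by
  have hs' := hγ s t h0 (by linarith) h4 s' h1 (by linarith)
  have ht' := hγ s t h0 (by linarith) h4 t' (by linarith) h3
  simp only [mem_union, mem_closedBall] at hs' ht'
  have hD : 0 ≤ dist (γ s) (γ t) := dist_nonneg
  have hκD : dist (γ s) (γ t) ≤ κ * dist (γ s) (γ t) := le_mul_of_one_le_left hD hκ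
  -- If both points are near the same endpoint, they are within `κ * dist (γ s) (γ t)` of each other;
  -- otherwise, within `(κ + 1) * dist (γ s) (γ t)`.
  have key : μ ≤ 2 * (κ * dist (γ s) (γ t)) := by
    rcases hs' with a | a <;> rcases ht' with b | b
    · linarith [dist_triangle_right (γ s') (γ t') (γ s)]
    · linarith [dist_triangle4_right (γ s') (γ t') (γ s) (γ t)]
    · linarith [dist_triangle4_right (γ s') (γ t') (γ t) (γ s), dist_comm (γ s) (γ t)]
    · linarith [dist_triangle_right (γ s') (γ t') (γ t)]
  rw [div_lt_iff₀ (by linarith)]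
  linarith
end
end

section
/- Let κ ≥ 1, let P be a polygonal curve in ℝ^d that admits a κ-bounded traversal, let 0 < μ ≤ δ, and let P' be a μ-simplification of P. Then for every point q ∈ ℝ^d, the number of edges of P' that intersect the closed ball B(q, δ) is at most 2·(1 + 8κ(δ + μ)/μ)^d. -/
/-!
Along `γ`, each edge of `p'` meeting `B(q, δ)` has a witness: a time `s` in the time interval of the
subcurve that it replaces, with `γ s ∈ B(q, δ + μ)` (`exists_near_point`), because the last edge of
that subcurve starts within `μ` of the start of the simplified edge and ends at the same vertex.
If two such edges are not consecutive, then a whole edge of `p'`, of length at least `μ`, is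
traversed between the two witnesses. Both of its endpoints lie in the two balls of the
`κ`-boundedness condition, whose union has diameter at most `(1 + κ) D ≤ 2 κ D`, where `D` is the
distance of the witness points; so `D ≥ μ / (2 κ)` (`separation`). A volume
argument (`card_le_of_separated_in_ball`) bounds the number of edges of even index, and that of
edges of odd index.
-/

open MeasureTheory Metric Set
open scoped ENNReal NNReal

noncomputable section

/-- Packing bound: the balls of radius `r / 2` around `r`-separated points of `B(q, R)` are disjoint
and lie in the ball of radius `R + r / 2`. -/
theorem card_le_of_separated_in_ball {d : ℕ} {ι : Type*} (s : Finset ι) (f : ι → Pt d) (q : Pt d)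
    {r R : ℝ} (hr : 0 < r) (hR : 0 ≤ R) (hf : ∀ i ∈ s, dist (f i) q ≤ R)
    (hsep : ∀ i ∈ s, ∀ j ∈ s, i ≠ j → r ≤ dist (f i) (f j)) :
    (s.card : ℝ) ≤ (1 + 2 * R / r) ^ d := by
  have hdisj : (s : Set ι).PairwiseDisjoint (fun i => ball (f i) (r / 2)) := by
    intro i hi j hj hij
    refine ball_disjoint_ball ?_
    linarith [hsep i hi j hj hij]
  have hsub : (⋃ i ∈ s, ball (f i) (r / 2)) ⊆ ball q (R + r / 2) := by
    refine iUnion₂_subset fun i hi => ball_subset_ball' ?_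
    linarith [hf i hi]
  have hvol : ∑ i ∈ s, volume (ball (f i) (r / 2)) ≤ volume (ball q (R + r / 2)) := by
    rw [← measure_biUnion_finset hdisj fun _ _ => measurableSet_ball]
    exact measure_mono hsub
  have hV0 : volume (ball (0 : Pt d) 1) ≠ 0 := (measure_ball_pos _ _ one_pos).ne'
  have hVtop : volume (ball (0 : Pt d) 1) ≠ ∞ := measure_ball_lt_top.ne
  have hfr : Module.finrank ℝ (Pt d) = d := by simp [Pt]
  have h1 : ∀ i ∈ s, volume (ball (f i) (r / 2))
      = ENNReal.ofReal ((r / 2) ^ d) * volume (ball (0 : Pt d) 1) := by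
    intro i _
    rw [Measure.addHaar_ball_of_pos _ _ (by positivity), hfr]
  rw [Finset.sum_congr rfl h1, Measure.addHaar_ball_of_pos _ q (by positivity), hfr, Finset.sum_const,
    nsmul_eq_mul, ← mul_assoc, ENNReal.mul_le_mul_iff_left hV0 hVtop,
    ← ENNReal.ofReal_natCast, ← ENNReal.ofReal_mul (by positivity),
    ENNReal.ofReal_le_ofReal_iff (by positivity), ← le_div_iff₀ (by positivity), ← div_pow] at hvol
  have he : (R + r / 2) / (r / 2) = 1 + 2 * R / r := by field_simp; ring
  rwa [he] at hvol

/-- The witness of an edge `[a, b]` meeting `B(q, δ)`: the point with the same affine parameter on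
the edge `[p l, p (l + 1)]`, where `p (l + 1) = b` and `p l` is within `μ` of `a`. -/
theorem exists_near_point {d k : ℕ} {μ δ : ℝ} {p : Fin (k + 1) → Pt d} {γ : ℝ → Pt d}
    {t : Fin (k + 1) → ℝ} (ht : Monotone t)
    (hγ : ∀ j : Fin k, (t j.castSucc = t j.succ → p j.castSucc = p j.succ) ∧
      ∀ s ∈ Icc (t j.castSucc) (t j.succ),
        γ s = AffineMap.lineMap (p j.castSucc) (p j.succ)
          ((s - t j.castSucc) / (t j.succ - t j.castSucc)))
    {a q : Pt d} (l : Fin k) (hl : dist (p l.castSucc) a ≤ μ)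
    (hq : (segment ℝ a (p l.succ) ∩ closedBall q δ).Nonempty) :
    ∃ s ∈ Icc (t l.castSucc) (t l.succ), dist (γ s) q ≤ δ + μ := by
  obtain ⟨x, hx, hxq⟩ := hq
  rw [segment_eq_image_lineMap] at hx
  obtain ⟨c, ⟨hc0, hc1⟩, rfl⟩ := hx
  have hmono : t l.castSucc ≤ t l.succ := ht l.castSucc_lt_succ.le
  have hmem : t l.castSucc + c * (t l.succ - t l.castSucc) ∈ Icc (t l.castSucc) (t l.succ) := by
    constructor <;> nlinarith
  refine ⟨_, hmem, ?_⟩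
  have hval : γ (t l.castSucc + c * (t l.succ - t l.castSucc))
      = AffineMap.lineMap (p l.castSucc) (p l.succ) c := by
    rw [(hγ l).2 _ hmem]
    by_cases hd : t l.castSucc = t l.succ
    · rw [(hγ l).1 hd]; simp
    · have : t l.succ - t l.castSucc ≠ 0 := sub_ne_zero.2 (Ne.symm hd)
      rw [add_sub_cancel_left, mul_div_cancel_right₀ _ this]
  rw [hval]
  have hd : dist (AffineMap.lineMap (p l.castSucc) (p l.succ) c : Pt d)
      (AffineMap.lineMap a (p l.succ) c) ≤ μ := by
    have he : (AffineMap.lineMap (p l.castSucc) (p l.succ) c : Pt d)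
        - AffineMap.lineMap a (p l.succ) c = (1 - c) • (p l.castSucc - a) := by
      simp only [AffineMap.lineMap_apply_module]; module
    rw [dist_eq_norm, he, norm_smul, Real.norm_of_nonneg (by linarith), ← dist_eq_norm]
    nlinarith [dist_nonneg (x := p l.castSucc) (y := a)]
  linarith [dist_triangle (AffineMap.lineMap (p l.castSucc) (p l.succ) c : Pt d)
    (AffineMap.lineMap a (p l.succ) c) q, mem_closedBall.1 hxq]

theorem traverses_vertex {d k : ℕ} {p : Fin (k + 1) → Pt d} {γ : ℝ → Pt d}
    {t : Fin (k + 1) → ℝ} (ht : Monotone t) (h0 : t 0 = 0) (h1 : t (Fin.last k) = 1)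
    (hγ : ∀ j : Fin k, (t j.castSucc = t j.succ → p j.castSucc = p j.succ) ∧
      ∀ s ∈ Icc (t j.castSucc) (t j.succ),
        γ s = AffineMap.lineMap (p j.castSucc) (p j.succ)
          ((s - t j.castSucc) / (t j.succ - t j.castSucc)))
    (i : Fin (k + 1)) : γ (t i) = p i := by
  rcases Fin.eq_castSucc_or_eq_last i with ⟨j, rfl⟩ | rfl
  · rw [(hγ j).2 _ ⟨le_rfl, ht j.castSucc_lt_succ.le⟩]; simp
  -- A single vertex has no traversal, as its only time would be both `0` and `1`.
  · rcases k with _ | k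
    · have : (Fin.last 0) = 0 := rfl
      rw [this, h0] at h1
      exact absurd h1 zero_ne_one
    · have hl : (Fin.last (k + 1)) = (Fin.last k).succ := rfl
      rw [hl, (hγ (Fin.last k)).2 _ ⟨ht (Fin.last k).castSucc_lt_succ.le, le_rfl⟩]
      by_cases hd : t (Fin.last k).castSucc = t (Fin.last k).succ
      · rw [(hγ _).1 hd]; simp
      · rw [div_self (sub_ne_zero.2 (Ne.symm hd))]; simp

/-- The points `γ u` and `γ v` lie in two balls of radius `κ / 2 * D` whose centers are
`D = dist (γ s) (γ t)` apart, so their distance is at most `(1 + κ) * D ≤ 2 * κ * D`. -/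
theorem separation {d : ℕ} {κ μ : ℝ} (hκ : 1 ≤ κ) {γ : ℝ → Pt d} (hb : IsKBounded κ γ)
    {s t u v : ℝ} (hs : 0 ≤ s) (hsu : s ≤ u) (huv : u ≤ v) (hvt : v ≤ t) (ht : t ≤ 1)
    (huvμ : μ ≤ dist (γ u) (γ v)) : μ / (2 * κ) ≤ dist (γ s) (γ t) := by
  have hst : s ≤ t := hsu.trans (huv.trans hvt)
  have hu := hb s t hs hst ht u hsu (huv.trans hvt)
  have hv := hb s t hs hst ht v (hsu.trans huv) hvt
  simp only [mem_union, mem_closedBall] at hu hv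
  rw [div_le_iff₀ (by positivity)]
  have hD : 0 ≤ dist (γ s) (γ t) := dist_nonneg
  have hD' : dist (γ s) (γ t) ≤ κ * dist (γ s) (γ t) := le_mul_of_one_le_left hD hκ
  rcases hu with hu | hu <;> rcases hv with hv | hv
  · linarith [dist_triangle_right (γ u) (γ v) (γ s)]
  · linarith [dist_triangle4_right (γ u) (γ v) (γ s) (γ t)]
  · linarith [dist_triangle4_right (γ u) (γ v) (γ t) (γ s), dist_comm (γ s) (γ t)]
  · linarith [dist_triangle_right (γ u) (γ v) (γ t)]

/-- For a `μ`-simplification `p'` of a polygonal curve admitting a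
`κ`-bounded traversal, at most `2 (1 + 8κ(δ+μ)/μ)^d` edges of `p'` intersect any closed
ball of radius `δ ≥ μ`. -/
theorem kappaBounded_simplified_ball_edges {d k m : ℕ} (κ μ δ : ℝ)
    (hκ : 1 ≤ κ) (hμ : 0 < μ) (hμδ : μ ≤ δ)
    (p : Fin (k + 1) → Pt d) (γ : ℝ → Pt d) (hγ : Traverses γ p) (hb : IsKBounded κ γ)
    (p' : Fin (m + 1) → Pt d) (h : IsSimplification μ p p') (q : Pt d) :
    (({j : Fin m |
        (segment ℝ (p' j.castSucc) (p' j.succ) ∩ closedBall q δ).Nonempty}).ncard : ℝ)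
      ≤ 2 * (1 + 8 * κ * (δ + μ) / μ) ^ d := by
  classical
  obtain ⟨t, htm, ht0, ht1, ht⟩ := hγ
  obtain ⟨idx, hmono, -, -, hp', hlen, hclose⟩ := h
  set S : Set (Fin m) :=
    {j | (segment ℝ (p' j.castSucc) (p' j.succ) ∩ closedBall q δ).Nonempty} with hS
  have hwit : ∀ j : Fin m, ∃ s : ℝ, j ∈ S →
      s ∈ Icc (t (idx j.castSucc)) (t (idx j.succ)) ∧ dist (γ s) q ≤ δ + μ := by
    intro j
    by_cases hj : j ∈ S
    · have hlt : idx j.castSucc < idx j.succ := hmono j.castSucc_lt_succ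
      obtain ⟨l, hl⟩ := Fin.exists_succ_eq.2 (Fin.ne_zero_of_lt hlt)
      have hle : idx j.castSucc ≤ l.castSucc := by
        rw [← hl] at hlt
        exact Fin.le_castSucc_iff.2 hlt
      have hd : dist (p l.castSucc) (p (idx j.castSucc)) ≤ μ := by
        rcases hle.eq_or_lt with he | hlt'
        · rw [he, dist_self]; exact hμ.le
        · exact hclose j _ hlt' (hl ▸ l.castSucc_lt_succ)
      have hj' := hj
      rw [hS, mem_ofPred_eq, hp', hp', ← hl] at hj'
      obtain ⟨s, hs, hsq⟩ := exists_near_point htm ht l hd hj'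
      exact ⟨s, fun _ => ⟨⟨(htm hle).trans hs.1, hl ▸ hs.2⟩, hsq⟩⟩
    · exact ⟨0, fun h => absurd h hj⟩
  choose w hw using hwit
  have hsep : ∀ i ∈ S, ∀ j ∈ S, (i : ℕ) + 2 ≤ j →
      μ / (2 * κ) ≤ dist (γ (w i)) (γ (w j)) := by
    intro i hi j hj hij
    obtain ⟨⟨hi1, hi2⟩, -⟩ := hw i hi
    obtain ⟨⟨hj1, hj2⟩, -⟩ := hw j hj
    -- `e` is the edge following `i`, traversed in full between the two witnesses.
    let e : Fin m := ⟨i + 1, by omega⟩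
    have he1 : i.succ = e.castSucc := rfl
    have he2 : e.succ ≤ j.castSucc := by
      rw [Fin.le_def]; simp [e]; omega
    rw [he1] at hi2
    refine separation hκ hb (u := t (idx e.castSucc)) (v := t (idx e.succ)) ?_ hi2
      (htm (hmono e.castSucc_lt_succ).le) ((htm (hmono.monotone he2)).trans hj1) ?_ ?_
    · exact (ht0.symm.trans_le (htm (Fin.zero_le _))).trans hi1
    · exact hj2.trans ((htm (Fin.le_last _)).trans_eq ht1)
    · rw [traverses_vertex htm ht0 ht1 ht, traverses_vertex htm ht0 ht1 ht]
      exact hlen e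
  have hκ0 : 0 < κ := by linarith
  have hclass : ∀ b : ℕ, ((S.toFinset.filter fun j : Fin m => (j : ℕ) % 2 = b).card : ℝ)
      ≤ (1 + 8 * κ * (δ + μ) / μ) ^ d := by
    intro b
    have hpack := card_le_of_separated_in_ball (S.toFinset.filter fun j : Fin m => (j : ℕ) % 2 = b)
      (fun j => γ (w j)) q (r := μ / (2 * κ)) (R := δ + μ) (by positivity) (by linarith)
      (fun i hi => (hw i (by simpa using (Finset.mem_filter.1 hi).1)).2)
      (by
        intro i hi j hj hij
        simp only [Finset.mem_filter, mem_toFinset] at hi hj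
        have hne : (i : ℕ) ≠ j := fun h => hij (Fin.ext h)
        rcases lt_or_gt_of_ne hne with hlt | hlt
        · exact hsep i hi.1 j hj.1 (by omega)
        · rw [dist_comm]
          exact hsep j hj.1 i hi.1 (by omega))
    refine hpack.trans ?_
    have hR : 0 < δ + μ := by linarith
    have he : 2 * (δ + μ) / (μ / (2 * κ)) = 4 * κ * (δ + μ) / μ := by field_simp; ring
    rw [he]
    gcongr
    norm_num
  have hcard : S.ncard = (S.toFinset.filter fun j : Fin m => (j : ℕ) % 2 = 0).card
      + (S.toFinset.filter fun j : Fin m => (j : ℕ) % 2 = 1).card := by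
    rw [ncard_eq_toFinset_card', ← Finset.card_filter_add_card_filter_not
      (s := S.toFinset) (fun j : Fin m => (j : ℕ) % 2 = 0)]
    simp only [Nat.mod_two_not_eq_zero]
  rw [hcard]
  push_cast
  linarith [hclass 0, hclass 1]
end
end

section
/- For every dimension d ≥ 1 there exists a constant C > 0, depending only on d, with the following property: for every finite set P of n ≥ 2 points in ℝ^d there exists a finite set Z of real numbers with |Z| ≤ C·n such that for every pair of distinct points p, q ∈ P there exist x, x' ∈ Z with x ≤ dist(p, q) ≤ x' ≤ 2x. -/
/-!
The set of dyadic scales `⌊log₂ dist p q⌋` occurring among the pairs of distinct points of a finite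
set `P` has at most `2 |P|` elements; hence the powers `2 ^ k` and `2 ^ (k + 1)`, over all occurring
scales `k`, form an admissible set `Z` with at most `4 |P|` elements.

It suffices to bound the number of scales of one parity by `|P|`. Pick one pair of points for each
such scale and merge the clusters of its two points, going through the scales in increasing order
and starting from singletons (as in Kruskal's algorithm). Before scale `a` is handled, all clusters
have diameter less than `2 ^ a`, so the pair chosen for `a` lies in two different clusters, and
merging them lowers the number of clusters by one. The merged cluster has diameter less than
`2 ^ a + 2 ^ (a + 1) + 2 ^ a = 2 ^ (a + 2)`, and the next scale of the same parity is at least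
`a + 2`. This is `exists_clustering`. The argument works in every metric space, so the constant
`C = 4` does not depend on the dimension.
-/

open MeasureTheory Metric Set
open scoped ENNReal NNReal

noncomputable section

/-- The clustering reached after handling all scales in `S`, all of the same parity `r`: `f` sends
a point to the label of its cluster. There are at most `|P| - |S|` clusters, and any two points of
a common cluster are closer than `2 ^ k` for every later scale `k` of the same parity. -/
lemma exists_clustering {X : Type*} [MetricSpace X] [DecidableEq X] (P : Finset X) (r : ℤ)
    (S : Finset ℤ) (hS : ∀ k ∈ S, k % 2 = r ∧
      ∃ p ∈ P, ∃ q ∈ P, (2 : ℝ) ^ k ≤ dist p q ∧ dist p q < (2 : ℝ) ^ (k + 1)) :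
    ∃ f : X → X, (P.image f).card + S.card ≤ P.card ∧
      ∀ k : ℤ, k % 2 = r → (∀ s ∈ S, s < k) →
        ∀ x ∈ P, ∀ y ∈ P, f x = f y → dist x y < (2 : ℝ) ^ k := by
  induction S using Finset.induction_on_max with
  | empty =>
    refine ⟨id, by simp, ?_⟩
    rintro k - - x - y - rfl
    simp only [id, dist_self]
    positivity
  | insert a S ha ih =>
    obtain ⟨f, hcard, hf⟩ := ih fun k hk => hS k (Finset.mem_insert_of_mem hk)
    obtain ⟨har, p, hp, q, hq, hle, hlt⟩ := hS a (Finset.mem_insert_self a S)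
    have hdiam := hf a har ha
    have hne : f p ≠ f q := fun h => (hdiam p hp q hq h).not_ge hle
    refine ⟨fun x => if f x = f p then f q else f x, ?_, ?_⟩
    · have hsub : P.image (fun x => if f x = f p then f q else f x) ⊆
          (P.image f).erase (f p) := by
        intro z hz
        obtain ⟨x, hx, rfl⟩ := Finset.mem_image.1 hz
        rw [Finset.mem_erase]
        split_ifs with h
        · exact ⟨hne.symm, Finset.mem_image_of_mem f hq⟩
        · exact ⟨h, Finset.mem_image_of_mem f hx⟩
      have h1 := Finset.card_le_card hsub
      have h2 := Finset.card_erase_add_one (Finset.mem_image_of_mem f hp)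
      have h3 := Finset.card_insert_of_notMem (fun h : a ∈ S => lt_irrefl a (ha a h))
      omega
    · intro k hk hkS x hx y hy hxy
      have hak : a < k := hkS a (Finset.mem_insert_self a S)
      have hpow : (2 : ℝ) ^ (a + 2) ≤ 2 ^ k :=
        zpow_le_zpow_right₀ (by norm_num) (by omega)
      have e1 : (2 : ℝ) ^ (a + 1) = 2 * 2 ^ a := by
        rw [zpow_add₀ (by norm_num)]; ring
      have e2 : (2 : ℝ) ^ (a + 2) = 4 * 2 ^ a := by
        rw [zpow_add₀ (by norm_num)]; norm_num; ring
      have hpos : (0 : ℝ) < 2 ^ a := by positivity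
      -- `x` and `y` lie in a common old cluster, or in the two clusters just merged; in the latter
      -- case the distance is bounded along a path through `p` and `q`.
      dsimp only at hxy
      split_ifs at hxy with h1 h2 h2
      · have := hdiam x hx y hy (h1.trans h2.symm)
        linarith
      · have hxp := hdiam x hx p hp h1
        have hqy := hdiam q hq y hy hxy
        have := dist_triangle4 x p q y
        linarith
      · have hxq := hdiam x hx q hq hxy
        have hyp := hdiam p hp y hy h2.symm
        have := dist_triangle4 x q p y
        rw [dist_comm q p] at this
        linarith
      · have := hdiam x hx y hy hxy
        linarith

/-- Approximate distance selection: a linear-size set of values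
approximating all pairwise distances up to a factor of `2`. -/
theorem approx_distance_selection (d : ℕ) (hd : 1 ≤ d) :
    ∃ C : ℝ, 0 < C ∧
      ∀ P : Finset (Pt d), 2 ≤ P.card →
        ∃ Z : Finset ℝ, (Z.card : ℝ) ≤ C * (P.card : ℝ) ∧
          ∀ p ∈ P, ∀ q ∈ P, p ≠ q →
            ∃ x ∈ Z, ∃ x' ∈ Z, x ≤ dist p q ∧ dist p q ≤ x' ∧ x' ≤ 2 * x := by
  classical
  refine ⟨4, by norm_num, fun P _ => ?_⟩
  -- the set of all dyadic scales of distances between distinct points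
  let K : Finset ℤ := P.offDiag.image fun z => Int.log 2 (dist z.1 z.2)
  have hscale : ∀ p q : Pt d, p ≠ q →
      (2 : ℝ) ^ Int.log 2 (dist p q) ≤ dist p q ∧
        dist p q < (2 : ℝ) ^ (Int.log 2 (dist p q) + 1) := fun p q hpq =>
    ⟨by exact_mod_cast Int.zpow_log_le_self (b := 2) (by norm_num) (dist_pos.2 hpq),
      by exact_mod_cast Int.lt_zpow_succ_log_self (b := 2) (by norm_num) (dist p q)⟩
  have hparity : ∀ r : ℤ, (K.filter fun k => k % 2 = r).card ≤ P.card := by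
    intro r
    obtain ⟨f, hf, -⟩ := exists_clustering P r (K.filter fun k => k % 2 = r) (by
      intro k hk
      obtain ⟨hkK, hkr⟩ := Finset.mem_filter.1 hk
      obtain ⟨⟨p, q⟩, hz, rfl⟩ := Finset.mem_image.1 hkK
      obtain ⟨hp, hq, hpq⟩ := Finset.mem_offDiag.1 hz
      exact ⟨hkr, p, hp, q, hq, hscale p q hpq⟩)
    omega
  have hK : K.card ≤ 2 * P.card := by
    have hsub : K ⊆ (K.filter fun k => k % 2 = 0) ∪ K.filter fun k => k % 2 = 1 := by
      intro k hk
      rcases Int.emod_two_eq_zero_or_one k with h | h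
      · exact Finset.mem_union_left _ (Finset.mem_filter.2 ⟨hk, h⟩)
      · exact Finset.mem_union_right _ (Finset.mem_filter.2 ⟨hk, h⟩)
    have h1 := Finset.card_le_card hsub
    have h2 := Finset.card_union_le (K.filter fun k => k % 2 = 0) (K.filter fun k => k % 2 = 1)
    have h3 := hparity 0
    have h4 := hparity 1
    omega
  refine ⟨(K.image fun k => (2 : ℝ) ^ k) ∪ K.image fun k => (2 : ℝ) ^ (k + 1), ?_, ?_⟩
  · have h1 := Finset.card_union_le (K.image fun k => (2 : ℝ) ^ k)
      (K.image fun k => (2 : ℝ) ^ (k + 1))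
    have h2 := Finset.card_image_le (s := K) (f := fun k => (2 : ℝ) ^ k)
    have h3 := Finset.card_image_le (s := K) (f := fun k => (2 : ℝ) ^ (k + 1))
    have h4 : ((K.image fun k => (2 : ℝ) ^ k) ∪ K.image fun k => (2 : ℝ) ^ (k + 1)).card
        ≤ 4 * P.card := by omega
    exact_mod_cast h4
  · intro p hp q hq hpq
    have hk : Int.log 2 (dist p q) ∈ K :=
      Finset.mem_image.2 ⟨(p, q), Finset.mem_offDiag.2 ⟨hp, hq, hpq⟩, rfl⟩
    obtain ⟨hle, hlt⟩ := hscale p q hpq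
    refine ⟨_, Finset.mem_union_left _ (Finset.mem_image_of_mem _ hk),
      _, Finset.mem_union_right _ (Finset.mem_image_of_mem _ hk), hle, hlt.le, ?_⟩
    rw [zpow_add₀ (by norm_num : (2 : ℝ) ≠ 0), zpow_one, mul_comm]
end
end
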